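/- In the DaC model on the square lattice with p < 1/2 and r > r_c(p), the number of infinite black r-clusters is ℙ_{p,r}-almost surely equal to 1. -/

import Mathlib

/-!
Common definitions for the Divide-and-Colour (DaC) model of
Bálint, Camia and Meester, "Sharp phase transition and critical
behaviour in 2D divide and colour models".

The model is built concretely: a single uniform random variable on `(0,1]`
is decomposed into countably many i.i.d. uniform random variables (via its
binary digits); one family of uniforms drives the Bernoulli(p) bond
percolation (the edge configuration), and an independent family of uniforms
attaches an independent Bernoulli(r) colour to each bond cluster (the colour
of a cluster is determined by the uniform label of its canonical
representative, the vertex of minimal encoding).  The DaC measure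
`ℙ_{p,r}` is the pushforward of Lebesgue measure on `(0,1]` under the map
producing the pair (edge configuration, colour configuration).
-/

open MeasureTheory ENNReal

namespace DaC

/-- Vertices of the lattice. -/
abbrev V : Type := ℤ × ℤ

/-- Square lattice adjacency: Euclidean distance `1`. -/
def SqAdj (u v : V) : Prop := (u.1 - v.1) ^ 2 + (u.2 - v.2) ^ 2 = 1

/-- `*`-adjacency (matching graph of the square lattice):
Euclidean distance `1` or `√2`. -/
def StarAdj (u v : V) : Prop :=
  (u.1 - v.1) ^ 2 + (u.2 - v.2) ^ 2 = 1 ∨ (u.1 - v.1) ^ 2 + (u.2 - v.2) ^ 2 = 2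

/-- Triangular lattice adjacency. -/
def TriAdj (u v : V) : Prop :=
  (u.1 - v.1, u.2 - v.2) ∈
    ({(1, 0), (-1, 0), (0, 1), (0, -1), (1, 1), (-1, -1)} : Set (ℤ × ℤ))

/-- Classical indicator of a proposition, as a boolean. -/
noncomputable def boolOf (P : Prop) : Bool := @decide P (Classical.propDecidable P)

/-- The `n`-th binary digit of a real number `x ∈ (0,1]`. -/
noncomputable def bit (n : ℕ) (x : ℝ) : Bool := boolOf (⌊x * 2 ^ (n + 1)⌋ % 2 = 1)

/-- A countable family of i.i.d. uniform random variables on `[0,1]`, extracted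
from a single uniform sample `x` by splitting its binary digits. -/
noncomputable def unif (i : ℕ) (x : ℝ) : ℝ :=
  ∑' k : ℕ, if bit (Nat.pair i k) x then ((2 : ℝ)⁻¹) ^ (k + 1) else 0

/-- A symmetric encoding of (unordered) pairs of vertices. -/
noncomputable def eIdx (u v : V) : ℕ :=
  min (Encodable.encode (u, v)) (Encodable.encode (v, u))

/-- The uniform label attached to the edge `{u,v}`. -/
noncomputable def edgeU (u v : V) (x : ℝ) : ℝ := unif (2 * eIdx u v) x

/-- The uniform label attached to the vertex `v` (independent of the edge labels). -/
noncomputable def vtxU (v : V) (x : ℝ) : ℝ := unif (2 * Encodable.encode v + 1) x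

/-- Edge configurations: a boolean (open/closed) for each (ordered) pair of
vertices; configurations arising from the model are symmetric and are
supported on pairs of adjacent vertices. -/
abbrev EdgeCfg : Type := V → V → Bool

/-- Colour configurations: a colour (black = `true`, white = `false`) for each vertex. -/
abbrev ColourCfg : Type := V → Bool

/-- Full configurations of the DaC model: an edge configuration together with
a colour configuration. -/
abbrev Config : Type := EdgeCfg × ColourCfg

/-- The Bernoulli(p) edge configuration determined by the uniform sample `x`,
on the lattice with adjacency `adj`: an edge `{u,v}` of the lattice is open
iff its uniform label is `< p`. -/
noncomputable def edgeCfg (adj : V → V → Prop) (p : ℝ) (x : ℝ) : EdgeCfg :=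
  fun u v => boolOf (adj u v) && boolOf (edgeU u v x < p)

/-- Connectivity through open edges of the edge configuration `η`. -/
def Conn (η : EdgeCfg) (u v : V) : Prop :=
  Relation.ReflTransGen (fun a b => η a b = true) u v

/-- The `p`-cluster of the vertex `v`: its connected component in the graph
retaining only open edges. -/
def pCluster (η : EdgeCfg) (v : V) : Set V := {w | Conn η v w}

/-- Canonical representative of the `p`-cluster of `v`: the vertex of the
cluster with minimal encoding. -/
noncomputable def clusterRep (η : EdgeCfg) (v : V) : V :=
  (Encodable.decode (α := V) (sInf (Encodable.encode '' pCluster η v))).getD v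

/-- The colour configuration with parameters `p, r` determined by the uniform
sample `x`: every `p`-cluster is coloured black (with probability `r`)
or white, independently of all other `p`-clusters, according to the uniform
label of its canonical representative. -/
noncomputable def colourCfg (adj : V → V → Prop) (p r : ℝ) (x : ℝ) : ColourCfg :=
  fun v => boolOf (vtxU (clusterRep (edgeCfg adj p x) v) x < r)

/-- The uniform sample: Lebesgue measure on `(0,1]`. -/
noncomputable def base : Measure ℝ := volume.restrict (Set.Ioc 0 1)

/-- `ν_p`: the product Bernoulli(p) measure on edge configurations of the
lattice with adjacency `adj`. -/
noncomputable def edgeMeasure (adj : V → V → Prop) (p : ℝ) : Measure EdgeCfg :=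
  base.map (edgeCfg adj p)

/-- `ℙ_{p,r}`: the DaC measure on pairs (edge configuration, colour
configuration) for the lattice with adjacency `adj`. -/
noncomputable def DaCMeasure (adj : V → V → Prop) (p r : ℝ) : Measure Config :=
  base.map (fun x => (edgeCfg adj p x, colourCfg adj p r x))

/-- Monochromatic connectivity: `u` and `v` are joined by a path (for the
adjacency `adj`) all of whose vertices have colour `c`. -/
def MonoConn (adj : V → V → Prop) (ξ : ColourCfg) (c : Bool) (u v : V) : Prop :=
  Relation.ReflTransGen (fun a b => adj a b ∧ ξ a = c ∧ ξ b = c) u v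

/-- The colour-`c` cluster of `v` (for the adjacency `adj`): empty if `v` does
not have colour `c`, and otherwise the maximal `adj`-connected set of
`c`-coloured vertices containing `v`. -/
def monoCluster (adj : V → V → Prop) (ξ : ColourCfg) (c : Bool) (v : V) : Set V :=
  {w | ξ v = c ∧ MonoConn adj ξ c v w}

/-- The origin. -/
def origin : V := (0, 0)

/-- The size (cardinality) of a set of vertices, with values in `ℝ≥0∞`. -/
noncomputable def sizeE (S : Set V) : ℝ≥0∞ := S.encard

/-- The probability, under the DaC measure with edge adjacency `eadj` and
parameters `p, r`, that the origin lies in an infinite colour-`c` cluster for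
the adjacency `cadj`. -/
noncomputable def percProb (eadj cadj : V → V → Prop) (c : Bool) (p r : ℝ) : ℝ≥0∞ :=
  DaCMeasure eadj p r {ω | (monoCluster cadj ω.2 c origin).Infinite}

/-- `Θ(p,r)` for the square lattice: probability that the origin lies in an
infinite black `r`-cluster. -/
noncomputable def thetaSq (p r : ℝ) : ℝ≥0∞ := percProb SqAdj SqAdj true p r

/-- `Θ*(p,s)` for the square lattice: the `ℙ_{p,1-s}`-probability that the
origin lies in an infinite white `*`-cluster. -/
noncomputable def thetaStarSq (p s : ℝ) : ℝ≥0∞ := percProb SqAdj StarAdj false p (1 - s)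

/-- `Θ(p,r)` for the triangular lattice. -/
noncomputable def thetaTri (p r : ℝ) : ℝ≥0∞ := percProb TriAdj TriAdj true p r

/-- The critical colouring density `r_c(p)` of the square lattice DaC model. -/
noncomputable def rcSq (p : ℝ) : ℝ :=
  sSup {r : ℝ | r ∈ Set.Icc (0 : ℝ) 1 ∧ thetaSq p r = 0}

/-- The critical colouring density `r_c*(p)` for white `*`-percolation. -/
noncomputable def rcStarSq (p : ℝ) : ℝ :=
  sSup {s : ℝ | s ∈ Set.Icc (0 : ℝ) 1 ∧ thetaStarSq p s = 0}

/-- The critical colouring density `r_c(p)` of the triangular lattice DaC model. -/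
noncomputable def rcTri (p : ℝ) : ℝ :=
  sSup {r : ℝ | r ∈ Set.Icc (0 : ℝ) 1 ∧ thetaTri p r = 0}

/-! ### Rectangles and crossings -/

/-- The rectangle `S_{n,m} = ([0,n] × [0,m]) ∩ ℤ²`. -/
def Rect (n m : ℕ) : Set V :=
  {v | 0 ≤ v.1 ∧ v.1 ≤ (n : ℤ) ∧ 0 ≤ v.2 ∧ v.2 ≤ (m : ℤ)}

/-- The top side of `S_{n,m}`. -/
def TopSide (n m : ℕ) : Set V := {v | v ∈ Rect n m ∧ v.2 = (m : ℤ)}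

/-- The bottom side of `S_{n,m}`. -/
def BotSide (n m : ℕ) : Set V := {v | v ∈ Rect n m ∧ v.2 = 0}

/-- The left side of `S_{n,m}`. -/
def LeftSide (n m : ℕ) : Set V := {v | v ∈ Rect n m ∧ v.1 = 0}

/-- The right side of `S_{n,m}`. -/
def RightSide (n m : ℕ) : Set V := {v | v ∈ Rect n m ∧ v.1 = (n : ℤ)}

/-- There is a path (for the adjacency `adj`), all of whose vertices lie in the
region `R` and satisfy the predicate `good`, from the set `A` to the set `B`. -/
def HasCrossing (adj : V → V → Prop) (good : V → Prop) (R A B : Set V) : Prop :=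
  ∃ (k : ℕ) (f : Fin (k + 1) → V),
    (∀ i, f i ∈ R ∧ good (f i)) ∧
    (∀ i : Fin k, adj (f i.castSucc) (f i.succ)) ∧
    f 0 ∈ A ∧ f (Fin.last k) ∈ B

/-- `V^b_{n,m}` as a set of colour configurations: there is a black vertical
crossing of `S_{n,m}` (for the adjacency `adj`). -/
def VertBC (adj : V → V → Prop) (n m : ℕ) : Set ColourCfg :=
  {ξ | HasCrossing adj (fun v => ξ v = true) (Rect n m) (TopSide n m) (BotSide n m)}

/-- `V^{w*}_{n,m}` as a set of colour configurations: there is a white vertical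
`*`-crossing of `S_{n,m}`. -/
def VertWStarC (n m : ℕ) : Set ColourCfg :=
  {ξ | HasCrossing StarAdj (fun v => ξ v = false) (Rect n m) (TopSide n m) (BotSide n m)}

/-- `H^{w*}_{n,m}` as a set of colour configurations: there is a white
horizontal `*`-crossing of `S_{n,m}`. -/
def HorizWStarC (n m : ℕ) : Set ColourCfg :=
  {ξ | HasCrossing StarAdj (fun v => ξ v = false) (Rect n m) (LeftSide n m) (RightSide n m)}

/-- The event (set of full configurations) determined by a set of colour
configurations. -/
def colourEvent (C : Set ColourCfg) : Set Config := {ω | ω.2 ∈ C}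

/-! ### Events depending on colours, increasing events, pivotal clusters -/

/-- The event `A` is defined in terms of the colours of the vertices in `W`. -/
def DependsOnColoursIn (A : Set Config) (W : Set V) : Prop :=
  ∀ ω ω' : Config, (∀ v ∈ W, ω.2 v = ω'.2 v) → (ω ∈ A ↔ ω' ∈ A)

/-- The event `A` is increasing (for the partial order comparing colour
configurations pointwise, black = `true` above white = `false`). -/
def IncreasingColourEvent (A : Set Config) : Prop :=
  ∀ ω ω' : Config, (∀ v : V, ω.2 v = true → ω'.2 v = true) → ω ∈ A → ω' ∈ A

/-- Flip the colours of the vertices of `C`. -/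
noncomputable def flipOn (C : Set V) (ξ : ColourCfg) : ColourCfg :=
  fun v => @ite _ (v ∈ C) (Classical.propDecidable _) (!ξ v) (ξ v)

/-- The set `C` is a pivotal `p`-cluster for the event `A` in the
configuration `ω`: `C` is a `p`-cluster of the edge configuration of `ω`, and
flipping the colour of (all the vertices of) `C` changes whether the
configuration belongs to `A`. -/
def IsPivotal (A : Set Config) (ω : Config) (C : Set V) : Prop :=
  (∃ v : V, C = pCluster ω.1 v) ∧ ¬ (ω ∈ A ↔ (ω.1, flipOn C ω.2) ∈ A)

/-- `n(A)`: the number of pivotal `p`-clusters for the event `A`, with values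
in `ℝ≥0∞`. -/
noncomputable def numPivotal (A : Set Config) (ω : Config) : ℝ≥0∞ :=
  {C : Set V | IsPivotal A ω C}.encard

/-! ### Barriers -/

/-- Connectivity in the square lattice avoiding the edges of `E`. -/
def AvoidConn (E : Set (V × V)) (u v : V) : Prop :=
  Relation.ReflTransGen (fun a b => SqAdj a b ∧ (a, b) ∉ E ∧ (b, a) ∉ E) u v

/-- `E` is a barrier: a set of edges of the square lattice whose removal
(keeping the end-vertices) separates `ℤ²` into two or more connected
components, exactly one of which is infinite. -/
def IsBarrier (E : Set (V × V)) : Prop :=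
  (∀ e ∈ E, SqAdj e.1 e.2) ∧
  (∃ v, {w | AvoidConn E v w}.Infinite) ∧
  (∀ v w, {x | AvoidConn E v x}.Infinite → {x | AvoidConn E w x}.Infinite → AvoidConn E v w) ∧
  (∃ v, {w | AvoidConn E v w}.Finite)

/-- The exterior of a barrier: its unique infinite complementary component. -/
def barrierExt (E : Set (V × V)) : Set V := {v | {w | AvoidConn E v w}.Infinite}

/-- The interior of a barrier: the union of the finite complementary components. -/
def barrierInt (E : Set (V × V)) : Set V := {v | {w | AvoidConn E v w}.Finite}

/-- The event `A ⊆ EdgeCfg` is increasing (opening edges preserves it). -/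
def IncreasingEdgeEvent (A : Set EdgeCfg) : Prop :=
  ∀ η η' : EdgeCfg, (∀ a b : V, η a b = true → η' a b = true) → η ∈ A → η' ∈ A

/-- The event `A ⊆ EdgeCfg` depends only on the states of the edges both of
whose endpoints lie in `W`. -/
def DependsOnEdgesIn (A : Set EdgeCfg) (W : Set V) : Prop :=
  ∀ η η' : EdgeCfg, (∀ a b : V, a ∈ W → b ∈ W → η a b = η' a b) → (η ∈ A ↔ η' ∈ A)

/-! ### Translations -/

/-- Translation of configurations by the vector `u`. -/
def shift (u : V) (ω : Config) : Config :=
  (fun a b => ω.1 (a + u) (b + u), fun a => ω.2 (a + u))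

end DaC
namespace DaC
open Relation

/-! ### Part 1: deterministic graph theory -/

abbrev Gr : Type := V → V → Prop

def Nice (G : Gr) : Prop := (∀ a b, G a b → G b a) ∧ (∀ a b, G a b → SqAdj a b)

def Off (G : Gr) (F : Finset V) : Gr := fun a b => G a b ∧ a ∉ F ∧ b ∉ F

def On (G : Gr) (F : Finset V) : Gr := fun a b => G a b ∧ a ∈ F ∧ b ∈ F

def Clus (G : Gr) (x : V) : Set V := {z | ReflTransGen G x z}

def Fill (G G' : Gr) (F : Finset V) : Prop :=
  (∀ a b, G a b → G' a b) ∧ (∀ a b, a ∉ F → b ∉ F → G' a b → G a b) ∧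
    ∀ a ∈ F, ∀ b ∈ F, ReflTransGen (On G' F) a b

noncomputable def box (m : ℕ) (u : V) : Finset V :=
  Finset.Icc (u.1 - m) (u.1 + m) ×ˢ Finset.Icc (u.2 - m) (u.2 + m)

lemma mem_box {m : ℕ} {u v : V} :
    v ∈ box m u ↔ (u.1 - m ≤ v.1 ∧ v.1 ≤ u.1 + m) ∧ (u.2 - m ≤ v.2 ∧ v.2 ≤ u.2 + m) := by
  simp [box, Finset.mem_product]

structure Hub (G : Gr) (F : Finset V) (x : Fin 3 → V) : Prop where
  conn : ∀ a ∈ F, ∀ b ∈ F, ReflTransGen (On G F) a b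
  adj : ∀ i, x i ∉ F ∧ ∃ f ∈ F, G (x i) f
  inf : ∀ i, (Clus (Off G F) (x i)).Infinite
  sep : ∀ i j, i ≠ j → x j ∉ Clus (Off G F) (x i)

def HasHub (G : Gr) (m : ℕ) (u : V) : Prop := ∃ F : Finset V, F ⊆ box m u ∧ ∃ x, Hub G F x

lemma rtg_mono {G G' : Gr} (h : ∀ a b, G a b → G' a b) {a b : V} (hab : ReflTransGen G a b) :
    ReflTransGen G' a b := by
  induction hab with
  | refl => exact .refl
  | tail _ h2 ih => exact ih.tail (h _ _ h2)

lemma rtg_symm {G : Gr} (h : ∀ a b, G a b → G b a) {a b : V} (hab : ReflTransGen G a b) :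
    ReflTransGen G b a := by
  induction hab with
  | refl => exact .refl
  | tail _ h2 ih => exact .head (h _ _ h2) ih

lemma off_symm {G : Gr} (h : ∀ a b, G a b → G b a) (F : Finset V) :
    ∀ a b, Off G F a b → Off G F b a := fun _ _ hab => ⟨h _ _ hab.1, hab.2.2, hab.2.1⟩

lemma rtg_off {G : Gr} {F : Finset V} {a b : V} (h : ReflTransGen (Off G F) a b) :
    ReflTransGen G a b := rtg_mono (fun _ _ h => h.1) h

lemma rtg_on {G : Gr} {F : Finset V} {a b : V} (h : ReflTransGen (On G F) a b) :
    ReflTransGen G a b := rtg_mono (fun _ _ h => h.1) h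

/-- endpoint of an `Off` path is off `F` when the start is -/
lemma off_end {G : Gr} {F : Finset V} {a b : V} (ha : a ∉ F) (h : ReflTransGen (Off G F) a b) :
    b ∉ F := by
  cases h with
  | refl => exact ha
  | tail _ h => exact h.2.2

/-- first entrance -/
lemma first_entrance {G : Gr} {F : Finset V} {z f : V} (h : ReflTransGen G z f) (hz : z ∉ F)
    (hf : f ∈ F) : ∃ y f', ReflTransGen (Off G F) z y ∧ y ∉ F ∧ f' ∈ F ∧ G y f' := by
  induction h using ReflTransGen.head_induction_on with
  | refl => exact absurd hf hz
  | @head a c hac hcb ih =>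
    by_cases hc : c ∈ F
    · exact ⟨a, c, .refl, hz, hc, hac⟩
    · obtain ⟨y, f', h1, h2, h3, h4⟩ := ih hc
      exact ⟨y, f', .head ⟨hac, hz, hc⟩ h1, h2, h3, h4⟩

/-- last exit -/
lemma last_exit {G : Gr} (hG : ∀ a b, G a b → G b a) {F : Finset V} {f z : V}
    (h : ReflTransGen G f z) (hz : z ∉ F)
    (hf : f ∈ F) : ∃ f' y, f' ∈ F ∧ G f' y ∧ y ∉ F ∧ ReflTransGen (Off G F) y z := by
  obtain ⟨y, f', h1, h2, h3, h4⟩ := first_entrance (rtg_symm hG h) hz hf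
  exact ⟨f', y, h3, hG _ _ h4, h2, rtg_symm (off_symm hG F) h1⟩

lemma sqadj_symm {a b : V} (h : SqAdj a b) : SqAdj b a := by
  unfold SqAdj at *; nlinarith

lemma sqadj_cases {a b : V} (h : SqAdj a b) :
    (b.1 = a.1 + 1 ∧ b.2 = a.2) ∨ (b.1 = a.1 - 1 ∧ b.2 = a.2) ∨
    (b.1 = a.1 ∧ b.2 = a.2 + 1) ∨ (b.1 = a.1 ∧ b.2 = a.2 - 1) := by
  unfold SqAdj at h
  have h1 : -1 ≤ a.1 - b.1 := by nlinarith [sq_nonneg (a.2 - b.2)]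
  have h2 : a.1 - b.1 ≤ 1 := by nlinarith [sq_nonneg (a.2 - b.2)]
  have h3 : -1 ≤ a.2 - b.2 := by nlinarith [sq_nonneg (a.1 - b.1)]
  have h4 : a.2 - b.2 ≤ 1 := by nlinarith [sq_nonneg (a.1 - b.1)]
  generalize hs : a.1 - b.1 = s at *
  generalize ht : a.2 - b.2 = t at *
  interval_cases s <;> interval_cases t <;> simp at h <;> omega

lemma sqadj_box {a b : V} (h : SqAdj a b) : a ∈ box 1 b := by
  rw [mem_box]; rcases sqadj_cases h with h | h | h | h <;> push_cast <;> omega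

lemma exists_inf_comp {G : Gr} (hG : Nice G) {F : Finset V} {x f : V}
    (hx : (Clus G x).Infinite) (hf : f ∈ F) (hxf : ReflTransGen G x f) :
    ∃ y, y ∉ F ∧ ReflTransGen G x y ∧ (∃ f ∈ F, G y f) ∧ (Clus (Off G F) y).Infinite := by
  by_contra hcon
  push Not at hcon
  apply hx
  have hfin : (⋃ y ∈ (F.biUnion (box 1) : Finset V), 
      ({z | (y ∉ F ∧ ReflTransGen G x y ∧ ∃ f ∈ F, G y f) ∧ z ∈ Clus (Off G F) y} : Set V)).Finite := by
    apply Set.Finite.biUnion (Finset.finite_toSet _)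
    intro y _
    by_cases hy : (y ∉ F ∧ ReflTransGen G x y ∧ ∃ f ∈ F, G y f)
    · have := hcon y hy.1 hy.2.1 hy.2.2
      exact this.subset fun z hz => hz.2
    · convert Set.finite_empty
      ext z; simp only [Set.mem_ofPred_eq, Set.mem_empty_iff_false, iff_false]
      exact fun h => hy h.1
  refine (hfin.union F.finite_toSet).subset ?_
  intro z hz
  by_cases hzF : z ∈ F
  · exact Or.inr hzF
  left
  have hzf : ReflTransGen G z f := (rtg_symm hG.1 hz).trans hxf
  obtain ⟨y, f', h1, h2, h3, h4⟩ := first_entrance hzf hzF hf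
  simp only [Set.mem_iUnion]
  refine ⟨y, ?_, ⟨h2, ?_, f', h3, h4⟩, rtg_symm (off_symm hG.1 F) h1⟩
  · exact Finset.mem_biUnion.2 ⟨f', h3, sqadj_box (hG.2 _ _ h4)⟩
  · exact ReflTransGen.trans hz (rtg_off h1)

lemma fill_unique {G G' : Gr} (hG' : Nice G') {F : Finset V} (hF : Fill G G' F)
    (h : ∀ x, (Clus G x).Infinite → ∃ f ∈ F, ReflTransGen G x f) {x y : V}
    (hx : (Clus G' x).Infinite) (hy : (Clus G' y).Infinite) : ReflTransGen G' x y := by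
  have key : ∀ x, (Clus G' x).Infinite → ∃ f ∈ F, ReflTransGen G' x f := by
    intro x hx
    by_contra hcon
    push Not at hcon
    have : ∀ z, ReflTransGen G' x z → ReflTransGen G x z := by
      intro z hz
      induction hz with
      | refl => exact .refl
      | @tail b c hb hbc ih =>
        exact ih.tail (hF.2.1 _ _ (fun hb' => hcon b hb' hb)
          (fun hc' => hcon c hc' (hb.tail hbc)) hbc)
    obtain ⟨f, hf, hxf⟩ := h x (hx.mono fun z hz => this z hz)
    exact hcon f hf (rtg_mono hF.1 hxf)
  obtain ⟨f, hf, hxf⟩ := key x hx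
  obtain ⟨g, hg, hyg⟩ := key y hy
  exact hxf.trans ((rtg_on (hF.2.2 f hf g hg)).trans (rtg_symm hG'.1 hyg))

lemma fill_hub {G G' : Gr} (hG : Nice G) {F : Finset V} (hF : Fill G G' F)
    (x : Fin 3 → V) (hx : ∀ i, (Clus G (x i)).Infinite)
    (hsep : ∀ i j, i ≠ j → ¬ ReflTransGen G (x i) (x j))
    (hm : ∀ i, ∃ f ∈ F, ReflTransGen G (x i) f) : ∃ y, Hub G' F y := by
  have : ∀ i, ∃ y, y ∉ F ∧ ReflTransGen G (x i) y ∧ (∃ f ∈ F, G y f) ∧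
      (Clus (Off G F) y).Infinite := by
    intro i
    obtain ⟨f, hf, hxf⟩ := hm i
    exact exists_inf_comp hG (hx i) hf hxf
  choose y h1 h2 h3 h4 using this
  refine ⟨y, ⟨hF.2.2, fun i => ⟨h1 i, ?_⟩, fun i => ?_, fun i j hij h => ?_⟩⟩
  · obtain ⟨f, hf, hg⟩ := h3 i
    exact ⟨f, hf, hF.1 _ _ hg⟩
  · exact (h4 i).mono fun z hz => rtg_mono (fun a b hab => ⟨hF.1 _ _ hab.1, hab.2⟩) hz
  · apply hsep i j hij
    have h' : ReflTransGen G (y i) (y j) :=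
      rtg_mono (fun a b hab => hF.2.1 _ _ hab.2.1 hab.2.2 hab.1) h
    exact (h2 i).trans (h'.trans (rtg_symm hG.1 (h2 j)))

/-! #### Counting -/

lemma laminar_count {ι : Type*} [DecidableEq ι] (n : ℕ) : ∀ (I : Finset ι) (Y : Finset V)
    (A B : ι → Finset V), I.card = n → (∀ i ∈ I, (A i).Nonempty) → (∀ i ∈ I, (B i).Nonempty) →
    (∀ i ∈ I, A i ⊆ Y) → (∀ i ∈ I, B i ⊆ Y) → (∀ i ∈ I, Disjoint (A i) (B i)) →
    (∀ i ∈ I, ∀ j ∈ I, i ≠ j → A j ∪ B j ⊆ A i ∨ A j ∪ B j ⊆ B i ∨ A i ∪ B i ⊆ A j ∨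
      A i ∪ B i ⊆ B j ∨ Disjoint (A i ∪ B i) (A j ∪ B j)) → n ≤ Y.card := by
  induction n with
  | zero => intros; exact Nat.zero_le _
  | succ n ih =>
    intro I Y A B hI hA hB hAY hBY hAB hrel
    have hne : I.Nonempty := by rw [← Finset.card_pos]; omega
    obtain ⟨i, hi, hmin⟩ := Finset.exists_min_image I (fun i => (A i ∪ B i).card) hne
    obtain ⟨a, ha⟩ := hA i hi
    obtain ⟨b, hb⟩ := hB i hi
    have hab : a ≠ b := fun h => Finset.disjoint_left.1 (hAB i hi) ha (h ▸ hb)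
    have haY : a ∈ Y := hAY i hi ha
    have hno : ∀ j ∈ I, j ≠ i → (A i ∪ B i ⊆ A j ∨ A i ∪ B i ⊆ B j ∨
        Disjoint (A i ∪ B i) (A j ∪ B j)) := by
      intro j hj hji
      have hc := hmin j hj
      rcases hrel i hi j hj hji.symm with h | h | h | h | h
      · exfalso
        have h1 := Finset.card_le_card h
        have h2 := Finset.card_union_of_disjoint (hAB i hi)
        have h3 := Finset.card_pos.2 (hB i hi)
        omega
      · exfalso
        have h1 := Finset.card_le_card h
        have h2 := Finset.card_union_of_disjoint (hAB i hi)
        have h3 := Finset.card_pos.2 (hA i hi)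
        omega
      · exact Or.inl h
      · exact Or.inr (Or.inl h)
      · exact Or.inr (Or.inr h)
    have hmem : ∀ j ∈ I, j ≠ i → (a ∈ A j → b ∈ A j) ∧ (a ∈ B j → b ∈ B j) := by
      intro j hj hji
      have hd := Finset.disjoint_left.1 (hAB j hj)
      rcases hno j hj hji with h | h | h
      · exact ⟨fun _ => h (Finset.mem_union_right _ hb),
          fun h' => absurd h' (hd (h (Finset.mem_union_left _ ha)))⟩
      · exact ⟨fun h' => absurd (h (Finset.mem_union_left _ ha)) (hd h'),
          fun _ => h (Finset.mem_union_right _ hb)⟩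
      · have := Finset.disjoint_left.1 h (Finset.mem_union_left _ ha)
        rw [Finset.mem_union] at this
        tauto
    have key := ih (I.erase i) (Y.erase a) (fun j => (A j).erase a) (fun j => (B j).erase a)
      (by rw [Finset.card_erase_of_mem hi]; omega)
      (fun j hj => by
        rw [Finset.mem_erase] at hj
        obtain ⟨c, hc⟩ := hA j hj.2
        by_cases hca : c = a
        · exact ⟨b, Finset.mem_erase.2 ⟨hab.symm, (hmem j hj.2 hj.1).1 (hca ▸ hc)⟩⟩
        · exact ⟨c, Finset.mem_erase.2 ⟨hca, hc⟩⟩)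
      (fun j hj => by
        rw [Finset.mem_erase] at hj
        obtain ⟨c, hc⟩ := hB j hj.2
        by_cases hca : c = a
        · exact ⟨b, Finset.mem_erase.2 ⟨hab.symm, (hmem j hj.2 hj.1).2 (hca ▸ hc)⟩⟩
        · exact ⟨c, Finset.mem_erase.2 ⟨hca, hc⟩⟩)
      (fun j hj => Finset.erase_subset_erase a (hAY j (Finset.mem_of_mem_erase hj)))
      (fun j hj => Finset.erase_subset_erase a (hBY j (Finset.mem_of_mem_erase hj)))
      (fun j hj => (hAB j (Finset.mem_of_mem_erase hj)).mono (Finset.erase_subset _ _)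
        (Finset.erase_subset _ _))
      (fun j hj k hk hjk => by
        simp only [← Finset.erase_union_distrib]
        rcases hrel j (Finset.mem_of_mem_erase hj) k (Finset.mem_of_mem_erase hk) hjk
          with h | h | h | h | h
        · exact Or.inl (Finset.erase_subset_erase a h)
        · exact Or.inr (Or.inl (Finset.erase_subset_erase a h))
        · exact Or.inr (Or.inr (Or.inl (Finset.erase_subset_erase a h)))
        · exact Or.inr (Or.inr (Or.inr (Or.inl (Finset.erase_subset_erase a h))))
        · exact Or.inr (Or.inr (Or.inr (Or.inr (h.mono (Finset.erase_subset _ _)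
            (Finset.erase_subset _ _))))))
    rw [Finset.card_erase_of_mem haY] at key
    have := Finset.card_pos.2 ⟨a, haY⟩
    omega

end DaC

namespace DaC
open Relation

noncomputable def sphere (M : ℕ) : Finset V := box (M + 1) 0 \ box M 0

lemma card_box (m : ℕ) (u : V) : (box m u).card = (2 * m + 1) ^ 2 := by
  simp only [box, Finset.card_product, Int.card_Icc]
  have h1 : (u.1 + m + 1 - (u.1 - m)).toNat = 2 * m + 1 := by omega
  have h2 : (u.2 + m + 1 - (u.2 - m)).toNat = 2 * m + 1 := by omega
  rw [h1, h2]; ring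

lemma card_sphere (M : ℕ) : (sphere M).card = 8 * M + 8 := by
  have hsub : box M 0 ⊆ box (M + 1) 0 := by
    intro v hv; rw [mem_box] at *; push_cast; omega
  have := Finset.card_sdiff_add_card_eq_card hsub
  rw [card_box, card_box] at this
  unfold sphere
  nlinarith

lemma step_sphere {M : ℕ} {b c : V} (h : SqAdj b c) (hb : b ∈ box M 0) (hc : c ∉ box M 0) :
    c ∈ sphere M := by
  rw [sphere, Finset.mem_sdiff]
  refine ⟨?_, hc⟩
  rw [mem_box] at *
  rcases sqadj_cases h with h | h | h | h <;> push_cast <;> simp at * <;> omega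

lemma exit_sphere {R : Gr} (hR : ∀ a b, R a b → SqAdj a b) {M : ℕ} {x z : V}
    (h : ReflTransGen R x z) (hx : x ∈ box M 0) (hz : z ∉ box M 0) :
    ∃ y ∈ sphere M, ReflTransGen R x y := by
  induction h with
  | refl => exact absurd hx hz
  | @tail b c hb hbc ih =>
    by_cases hb' : b ∈ box M 0
    · exact ⟨c, step_sphere (hR _ _ hbc) hb' hz, hb.tail hbc⟩
    · exact ih hb'

lemma hub_nested {G : Gr} (hG : Nice G) {Fi Fj : Finset V} (hd : Disjoint Fi Fj)
    (hconn : ∀ a ∈ Fj, ∀ b ∈ Fj, ReflTransGen (On G Fj) a b) {y0 fi x x' g : V}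
    (hy0 : y0 ∉ Fi) (hfi : fi ∈ Fi) (hfy : ReflTransGen G fi y0)
    (hx : y0 ∉ Clus (Off G Fi) x) (hxi : x ∉ Fi)
    (hg : g ∈ Fj) (hgx : g ∈ Clus (Off G Fi) x) (hx' : x' ∉ Fj) (hx'F : ∃ f ∈ Fj, G x' f)
    (hy0' : y0 ∉ Clus (Off G Fj) x')
    (hconni : ∀ a ∈ Fi, ∀ b ∈ Fi, ReflTransGen (On G Fi) a b) :
    Clus (Off G Fj) x' ⊆ Clus (Off G Fi) x := by
  have hdi := Finset.disjoint_left.1 hd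
  have hdj := Finset.disjoint_right.1 hd
  have on_off : ∀ {a b}, ReflTransGen (On G Fj) a b → ReflTransGen (Off G Fi) a b :=
    fun h => rtg_mono (fun a b hab => ⟨hab.1, hdj hab.2.1, hdj hab.2.2⟩) h
  have on_off' : ∀ {a b}, ReflTransGen (On G Fi) a b → ReflTransGen (Off G Fj) a b :=
    fun h => rtg_mono (fun a b hab => ⟨hab.1, hdi hab.2.1, hdi hab.2.2⟩) h
  have hFj : ∀ f ∈ Fj, f ∈ Clus (Off G Fi) x := fun f hf =>
    ReflTransGen.trans hgx (on_off (hconn g hg f hf))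
  have havoid : ∀ f ∈ Fi, f ∉ Clus (Off G Fj) x' := by
    intro f hf hfx
    apply hy0'
    obtain ⟨f', y, h1, h2, h3, h4⟩ := last_exit hG.1 hfy hy0 hfi
    have hyx : ∀ w, ReflTransGen (Off G Fi) y w → w ∉ Fj := by
      intro w hw hwj
      apply hx
      have := hFj w hwj
      exact ReflTransGen.trans (ReflTransGen.trans this (rtg_symm (off_symm hG.1 Fi) hw)) h4
    have h5 : ∀ w, ReflTransGen (Off G Fi) y w → ReflTransGen (Off G Fj) y w := by
      intro w hw
      induction hw with
      | refl => exact .refl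
      | @tail b c hb hbc ih => exact ih.tail ⟨hbc.1, hyx b hb, hyx c (hb.tail hbc)⟩
    have h6 : ReflTransGen (Off G Fj) f' y := .single ⟨h2, hdi h1, hyx y .refl⟩
    exact ReflTransGen.trans hfx ((on_off' (hconni f hf f' h1)).trans (h6.trans (h5 _ h4)))
  have hx'i : x' ∉ Fi := fun h => havoid x' h .refl
  obtain ⟨f, hf, hxf⟩ := hx'F
  have hx'x : x' ∈ Clus (Off G Fi) x :=
    ReflTransGen.trans (hFj f hf) (.single ⟨hG.1 _ _ hxf, hdj hf, hx'i⟩)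
  intro z hz
  refine ReflTransGen.trans hx'x ?_
  have : ∀ w, ReflTransGen (Off G Fj) x' w → ReflTransGen (Off G Fi) x' w := by
    intro w hw
    induction hw with
    | refl => exact .refl
    | @tail b c hb hbc ih =>
      exact ih.tail ⟨hbc.1, fun h => havoid b h hb, fun h => havoid c h (hb.tail hbc)⟩
  exact this z hz

lemma hub_disjoint {G : Gr} (hG : Nice G) {Fi Fj : Finset V} (hd : Disjoint Fi Fj)
    {x x' : V} (hxF : ∃ f ∈ Fi, G x f)
    (h1 : ∀ f ∈ Fj, f ∉ Clus (Off G Fi) x) (h2 : ∀ f ∈ Fi, f ∉ Clus (Off G Fj) x') (z : V)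
    (hz : z ∈ Clus (Off G Fi) x) (hz' : z ∈ Clus (Off G Fj) x') : False := by
  have hdi := Finset.disjoint_left.1 hd
  have h3 : ∀ w, ReflTransGen (Off G Fi) x w → ReflTransGen (Off G Fj) x w := by
    intro w hw
    induction hw with
    | refl => exact .refl
    | @tail b c hb hbc ih =>
      exact ih.tail ⟨hbc.1, fun h => h1 b h hb, fun h => h1 c h (hb.tail hbc)⟩
  have hx : x ∈ Clus (Off G Fj) x' :=
    ReflTransGen.trans hz' (rtg_symm (off_symm hG.1 Fj) (h3 z hz))
  obtain ⟨f, hf, hxf⟩ := hxF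
  have hxj : x ∉ Fj := fun h => h1 x h .refl
  exact h2 f hf (ReflTransGen.tail hx ⟨hxf, hxj, hdi hf⟩)

lemma hub_meets {G : Gr} (hG : Nice G) {M : ℕ} {F : Finset V} {x : Fin 3 → V} (h : Hub G F x)
    (hF : F ⊆ box M 0) (i : Fin 3) : ∃ y ∈ sphere M, y ∈ Clus (Off G F) (x i) := by
  by_cases hx : x i ∈ box M 0
  · obtain ⟨z, hz, hzb⟩ := (h.inf i).exists_notMem_finset (box M 0)
    obtain ⟨y, hy, hxy⟩ := exit_sphere (R := Off G F) (fun a b hab => hG.2 _ _ hab.1) hz hx hzb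
    exact ⟨y, hy, hxy⟩
  · obtain ⟨f, hf, hxf⟩ := (h.adj i).2
    exact ⟨x i, step_sphere (hG.2 _ _ (hG.1 _ _ hxf)) (hF hf) hx, .refl⟩

open Classical in
noncomputable def rootOf (Z : Set V) : V := if h : Z.Nonempty then h.some else 0

lemma rootOf_mem {Z : Set V} (h : Z.Nonempty) : rootOf Z ∈ Z := by
  unfold rootOf; rw [dif_pos h]; exact h.some_mem

open Classical in
lemma hub_count {ι : Type*} {G : Gr} (hG : Nice G) {M : ℕ} (I : Finset ι) (F : ι → Finset V)
    (x : ι → Fin 3 → V) (hub : ∀ i ∈ I, Hub G (F i) (x i)) (hF : ∀ i ∈ I, F i ⊆ box M 0)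
    (hd : ∀ i ∈ I, ∀ j ∈ I, i ≠ j → Disjoint (F i) (F j)) : I.card ≤ 8 * M + 8 := by
  have hne : ∀ i ∈ I, ∃ f ∈ F i, G (x i 0) f := fun i hi => ((hub i hi).adj 0).2
  let Z : ι → Set V := fun i => {y | y ∈ sphere M ∧ ReflTransGen G (x i 0) y}
  have hsame : ∀ i ∈ I, ∀ k l, ReflTransGen G (x i k) (x i l) := by
    intro i hi k l
    obtain ⟨f, hf, hxf⟩ := ((hub i hi).adj k).2
    obtain ⟨g, hg, hxg⟩ := ((hub i hi).adj l).2
    exact ReflTransGen.head hxf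
      ((rtg_on ((hub i hi).conn f hf g hg)).trans (.single (hG.1 _ _ hxg)))
  have hZ : ∀ i ∈ I, (Z i).Nonempty := by
    intro i hi
    obtain ⟨y, hy, hxy⟩ := hub_meets hG (hub i hi) (hF i hi) 0
    exact ⟨y, hy, rtg_off hxy⟩
  let r : ι → V := fun i => rootOf (Z i)
  have hr : ∀ i ∈ I, r i ∈ sphere M ∧ ReflTransGen G (x i 0) (r i) := fun i hi =>
    rootOf_mem (hZ i hi)
  have hchoose : ∀ i ∈ I, ∃ k l : Fin 3, k ≠ l ∧ r i ∉ Clus (Off G (F i)) (x i k) ∧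
      r i ∉ Clus (Off G (F i)) (x i l) := by
    intro i hi
    have hu : ∀ k l : Fin 3, k ≠ l → r i ∈ Clus (Off G (F i)) (x i k) →
        r i ∉ Clus (Off G (F i)) (x i l) := by
      intro k l hkl h1 h2
      exact (hub i hi).sep k l hkl
        (ReflTransGen.trans h1 (rtg_symm (off_symm hG.1 _) h2))
    by_cases h0 : r i ∈ Clus (Off G (F i)) (x i 0)
    · exact ⟨1, 2, by decide, hu 0 1 (by decide) h0, hu 0 2 (by decide) h0⟩
    · by_cases h1 : r i ∈ Clus (Off G (F i)) (x i 1)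
      · exact ⟨0, 2, by decide, h0, hu 1 2 (by decide) h1⟩
      · exact ⟨0, 1, by decide, h0, h1⟩
  choose! k l hkl hrk hrl using hchoose
  have nested : ∀ i ∈ I, ∀ j ∈ I, i ≠ j → ∀ s t, r i ∉ Clus (Off G (F i)) (x i s) →
      r j ∉ Clus (Off G (F j)) (x j t) → ∀ g ∈ F j, g ∈ Clus (Off G (F i)) (x i s) →
      Clus (Off G (F j)) (x j t) ⊆ Clus (Off G (F i)) (x i s) := by
    intro i hi j hj hij s t hs ht g hg hgx
    obtain ⟨f, hf, hxf⟩ := ((hub i hi).adj 0).2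
    obtain ⟨f2, hf2, hxf2⟩ := ((hub j hj).adj 0).2
    have hconn : ReflTransGen G (x i 0) (x j 0) :=
      (hsame i hi 0 s).trans ((rtg_off hgx).trans
        ((rtg_on ((hub j hj).conn g hg f2 hf2)).trans (.single (hG.1 _ _ hxf2))))
    have hZe : Z i = Z j := by
      ext y
      constructor
      · exact fun h => ⟨h.1, (rtg_symm hG.1 hconn).trans h.2⟩
      · exact fun h => ⟨h.1, hconn.trans h.2⟩
    have hre : r i = r j := by simp only [r, hZe]
    have hnF : r i ∉ F i := fun h =>
      (Finset.mem_sdiff.1 (hr i hi).1).2 (hF i hi h)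
    exact hub_nested hG (hd i hi j hj hij) (hub j hj).conn hnF hf
      (.head (hG.1 _ _ hxf) (hr i hi).2) hs ((hub i hi).adj s).1 hg hgx ((hub j hj).adj t).1
      ((hub j hj).adj t).2 (hre ▸ ht) (hub i hi).conn
  let K : ι → Fin 3 → Finset V := fun i s => (sphere M).filter (· ∈ Clus (Off G (F i)) (x i s))
  have hK : ∀ {i s y}, y ∈ K i s ↔ y ∈ sphere M ∧ y ∈ Clus (Off G (F i)) (x i s) := by
    intro i s y; simp [K]
  have hKne : ∀ i ∈ I, ∀ s, (K i s).Nonempty := fun i hi s => by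
    obtain ⟨y, hy, hxy⟩ := hub_meets hG (hub i hi) (hF i hi) s
    exact ⟨y, hK.2 ⟨hy, hxy⟩⟩
  rw [← card_sphere M]
  refine laminar_count I.card I (sphere M) (fun i => K i (k i)) (fun i => K i (l i)) rfl
    (fun i hi => hKne i hi _) (fun i hi => hKne i hi _) (fun i _ => Finset.filter_subset _ _)
    (fun i _ => Finset.filter_subset _ _) ?_ ?_
  · intro i hi
    rw [Finset.disjoint_left]
    intro y hy hy'
    exact (hub i hi).sep _ _ (hkl i hi)
      (ReflTransGen.trans (hK.1 hy).2 (rtg_symm (off_symm hG.1 _) (hK.1 hy').2))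
  · have sub : ∀ i ∈ I, ∀ j ∈ I, i ≠ j → ∀ s, r i ∉ Clus (Off G (F i)) (x i s) →
        (∃ g ∈ F j, g ∈ Clus (Off G (F i)) (x i s)) → K j (k j) ∪ K j (l j) ⊆ K i s := by
      intro i hi j hj hij s hs ⟨g, hg, hgx⟩ y hy
      rcases Finset.mem_union.1 hy with hy | hy
      · exact hK.2 ⟨(hK.1 hy).1, nested i hi j hj hij s _ hs (hrk j hj) g hg hgx (hK.1 hy).2⟩
      · exact hK.2 ⟨(hK.1 hy).1, nested i hi j hj hij s _ hs (hrl j hj) g hg hgx (hK.1 hy).2⟩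
    intro i hi j hj hij
    by_cases c1 : ∃ g ∈ F j, g ∈ Clus (Off G (F i)) (x i (k i))
    · exact Or.inl (sub i hi j hj hij _ (hrk i hi) c1)
    by_cases c2 : ∃ g ∈ F j, g ∈ Clus (Off G (F i)) (x i (l i))
    · exact Or.inr (Or.inl (sub i hi j hj hij _ (hrl i hi) c2))
    by_cases c3 : ∃ g ∈ F i, g ∈ Clus (Off G (F j)) (x j (k j))
    · exact Or.inr (Or.inr (Or.inl (sub j hj i hi hij.symm _ (hrk j hj) c3)))
    by_cases c4 : ∃ g ∈ F i, g ∈ Clus (Off G (F j)) (x j (l j))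
    · exact Or.inr (Or.inr (Or.inr (Or.inl (sub j hj i hi hij.symm _ (hrl j hj) c4))))
    refine Or.inr (Or.inr (Or.inr (Or.inr ?_)))
    push Not at c1 c2 c3 c4
    rw [Finset.disjoint_left]
    intro y hy hy'
    rcases Finset.mem_union.1 hy with hy | hy <;> rcases Finset.mem_union.1 hy' with hy' | hy'
    · exact hub_disjoint hG (hd i hi j hj hij) ((hub i hi).adj _).2 c1 c3 y (hK.1 hy).2 (hK.1 hy').2
    · exact hub_disjoint hG (hd i hi j hj hij) ((hub i hi).adj _).2 c1 c4 y (hK.1 hy).2 (hK.1 hy').2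
    · exact hub_disjoint hG (hd i hi j hj hij) ((hub i hi).adj _).2 c2 c3 y (hK.1 hy).2 (hK.1 hy').2
    · exact hub_disjoint hG (hd i hi j hj hij) ((hub i hi).adj _).2 c2 c4 y (hK.1 hy).2 (hK.1 hy').2

end DaC

namespace DaC
open Relation MeasureTheory

/-! ### Part 3: measurability -/

section meas
variable {Ω : Type*} [MeasurableSpace Ω]

def ReachN (G : Gr) : ℕ → Gr
  | 0 => fun a b => a = b
  | n + 1 => fun a b => ∃ c, ReachN G n a c ∧ G c b

lemma rtg_iff_reachN {G : Gr} {a b : V} : ReflTransGen G a b ↔ ∃ n, ReachN G n a b := by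
  constructor
  · intro h
    induction h with
    | refl => exact ⟨0, rfl⟩
    | tail _ h ih => obtain ⟨n, hn⟩ := ih; exact ⟨n + 1, _, hn, h⟩
  · rintro ⟨n, hn⟩
    induction n generalizing b with
    | zero => cases hn; exact .refl
    | succ n ih => obtain ⟨c, h1, h2⟩ := hn; exact (ih h1).tail h2

/-- Measurable random graph. -/
def MGr (G : Ω → Gr) : Prop := ∀ a b, Measurable fun ω => G ω a b

lemma MGr.reachN {G : Ω → Gr} (hG : MGr G) (n : ℕ) : MGr fun ω => ReachN (G ω) n := by
  induction n with
  | zero => intro a b; exact measurable_const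
  | succ n ih => intro a b; exact Measurable.exists fun c => (ih a c).and (hG c b)

lemma MGr.rtg {G : Ω → Gr} (hG : MGr G) (a b : V) :
    Measurable fun ω => ReflTransGen (G ω) a b := by
  simp_rw [rtg_iff_reachN]
  exact Measurable.exists fun n => hG.reachN n a b

lemma infinite_iff {S : Set V} : S.Infinite ↔ ∀ F : Finset V, ∃ w, w ∉ F ∧ w ∈ S := by
  constructor
  · intro h F; obtain ⟨w, h1, h2⟩ := h.exists_notMem_finset F; exact ⟨w, h2, h1⟩
  · intro h hf
    obtain ⟨w, h1, h2⟩ := h hf.toFinset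
    exact h1 (by simpa using h2)

lemma MGr.inf {G : Ω → Gr} (hG : MGr G) (a : V) :
    Measurable fun ω => (Clus (G ω) a).Infinite := by
  simp_rw [infinite_iff]
  exact Measurable.forall fun F => Measurable.exists fun w => measurable_const.and (hG.rtg a w)

lemma MGr.off {G : Ω → Gr} (hG : MGr G) (F : Finset V) : MGr fun ω => Off (G ω) F :=
  fun a b => (hG a b).and measurable_const

lemma MGr.on {G : Ω → Gr} (hG : MGr G) (F : Finset V) : MGr fun ω => On (G ω) F :=
  fun a b => (hG a b).and measurable_const

lemma hub_iff {G : Gr} {F : Finset V} {x : Fin 3 → V} : Hub G F x ↔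
    (∀ a b, a ∈ F → b ∈ F → ReflTransGen (On G F) a b) ∧
    (∀ i, x i ∉ F ∧ ∃ f, f ∈ F ∧ G (x i) f) ∧
    (∀ i, (Clus (Off G F) (x i)).Infinite) ∧
    (∀ i j, i ≠ j → ¬ ReflTransGen (Off G F) (x i) (x j)) :=
  ⟨fun h => ⟨fun a b ha hb => h.conn a ha b hb, h.adj, h.inf, h.sep⟩,
   fun h => ⟨fun a ha b hb => h.1 a b ha hb, h.2.1, h.2.2.1, h.2.2.2⟩⟩

lemma MGr.hub {G : Ω → Gr} (hG : MGr G) (F : Finset V) (x : Fin 3 → V) :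
    Measurable fun ω => Hub (G ω) F x := by
  simp_rw [hub_iff]
  refine Measurable.and ?_ (Measurable.and ?_ (Measurable.and ?_ ?_))
  · exact .forall fun a => .forall fun b => measurable_const.imp (measurable_const.imp ((hG.on F).rtg a b))
  · exact .forall fun i => measurable_const.and (.exists fun f => measurable_const.and (hG _ _))
  · exact .forall fun i => (hG.off F).inf _
  · exact .forall fun i => .forall fun j => measurable_const.imp ((hG.off F).rtg _ _).not

lemma MGr.hasHub {G : Ω → Gr} (hG : MGr G) (m : ℕ) (u : V) :
    Measurable fun ω => HasHub (G ω) m u :=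
  .exists fun F => measurable_const.and (.exists fun x => hG.hub F x)

/-- two infinite clusters -/
def Two (G : Gr) : Prop :=
  ∃ x y, (Clus G x).Infinite ∧ (Clus G y).Infinite ∧ ¬ ReflTransGen G x y

def Some1 (G : Gr) : Prop := ∃ x, (Clus G x).Infinite

lemma MGr.two {G : Ω → Gr} (hG : MGr G) : Measurable fun ω => Two (G ω) :=
  .exists fun x => .exists fun y => (hG.inf x).and ((hG.inf y).and (hG.rtg x y).not)

lemma MGr.some1 {G : Ω → Gr} (hG : MGr G) : Measurable fun ω => Some1 (G ω) :=
  .exists fun x => hG.inf x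

end meas

/-! ### Part 4: product measures -/

abbrev Om : Type := V × Fin 3 → Bool

noncomputable def PP (ν : Fin 3 → Measure Bool) : Measure Om :=
  Measure.infinitePi (fun i : V × Fin 3 => ν i.2)

def tau (u : V) (ω : Om) : Om := fun i => ω (i.1 + u, i.2)

section erg
variable {ν : Fin 3 → Measure Bool} [∀ k, IsProbabilityMeasure (ν k)]

instance : IsProbabilityMeasure (PP ν) := by unfold PP; infer_instance

lemma measurable_reindex (e : V × Fin 3 → V × Fin 3) :
    Measurable (fun (ω : Om) i => ω (e i) : Om → Om) := by fun_prop

lemma mp_reindex {e : V × Fin 3 → V × Fin 3} (he : Function.Injective e)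
    (hν : ∀ i, ν (e i).2 = ν i.2) :
    MeasurePreserving (fun (ω : Om) i => ω (e i) : Om → Om) (PP ν) (PP ν) := by
  refine ⟨measurable_reindex e, ?_⟩
  unfold PP
  rw [Measure.map_infinitePi_infinitePi_of_inj (P := fun i : V × Fin 3 => ν i.2) he]
  simp_rw [hν]

lemma mp_tau (u : V) : MeasurePreserving (tau u) (PP ν) (PP ν) := by
  refine mp_reindex (e := fun i => (i.1 + u, i.2)) ?_ fun _ => rfl
  rintro ⟨a, k⟩ ⟨b, l⟩ h
  simp only [Prod.mk.injEq, _root_.add_left_inj] at h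
  exact Prod.ext h.1 h.2

end erg
end DaC

namespace DaC
open Relation MeasureTheory ProbabilityTheory
open scoped symmDiff

section erg
variable {ν : Fin 3 → Measure Bool} [∀ k, IsProbabilityMeasure (ν k)]

lemma indep_coord : iIndepFun (fun (i : V × Fin 3) (ω : Om) => ω i) (PP ν) := by
  unfold PP
  exact iIndepFun_infinitePi (P := fun i : V × Fin 3 => ν i.2) (X := fun _ x => x)
    (fun _ => measurable_id)

lemma shift_far (s : Finset (V × Fin 3)) :
    ∃ u : V, ∀ i ∈ s, ∀ j ∈ s, ((i.1 + u, i.2) : V × Fin 3) ≠ j := by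
  obtain ⟨M, hM⟩ : ∃ M : ℤ, ∀ i ∈ s, |i.1.1| ≤ M := by
    obtain ⟨M, hM⟩ := (s.image fun i => |i.1.1|).bddAbove
    exact ⟨M, fun i hi => hM (Finset.mem_coe.2 (Finset.mem_image.2 ⟨i, hi, rfl⟩))⟩
  refine ⟨(2 * M + 1, 0), fun i hi j hj h => ?_⟩
  have h1 := congrArg (fun z : V × Fin 3 => z.1.1) h
  simp at h1
  have h2 := abs_le.1 (hM i hi)
  have h3 := abs_le.1 (hM j hj)
  omega

theorem ergodic01 {A : Set Om} (hA : MeasurableSet A) (hinv : ∀ u, tau u ⁻¹' A = A) :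
    PP ν A = 0 ∨ PP ν A = 1 := by
  set a := (PP ν).real A with ha
  have key : ∀ ε : ℝ, 0 < ε → |a - a ^ 2| ≤ 4 * ε := by
    intro ε hε
    obtain ⟨C, hC, hCA⟩ := exists_measure_symmDiff_lt_of_generateFrom_isSetRing (μ := PP ν)
      (C := measurableCylinders fun _ : V × Fin 3 => Bool) isSetRing_measurableCylinders
      ⟨{Set.univ}, by simp, Set.singleton_subset_iff.2 (univ_mem_measurableCylinders _), by simp⟩
      generateFrom_measurableCylinders.symm hA (ε := ENNReal.ofReal ε) (by simpa using hε)
    obtain ⟨s, S, hS, rfl⟩ := (mem_measurableCylinders _).1 hC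
    set C : Set Om := cylinder (α := fun _ : V × Fin 3 => Bool) s S with hCdef
    have hCm : MeasurableSet C := hS.cylinder
    obtain ⟨u, hu⟩ := shift_far s
    have hD : (PP ν).real (C ∆ A) ≤ ε := by
      rw [measureReal_def]
      exact ENNReal.toReal_le_of_le_ofReal hε.le hCA.le
    have hτ : Measurable (tau u) := (mp_tau (ν := ν) u).measurable
    have hD' : (PP ν).real ((tau u ⁻¹' C) ∆ A) ≤ ε := by
      have : (tau u ⁻¹' C) ∆ A = tau u ⁻¹' (C ∆ A) := by
        conv_lhs => rw [← hinv u]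
        rfl
      rw [this, measureReal_def, (mp_tau u).measure_preimage (hCm.symmDiff hA).nullMeasurableSet]
      exact hD
    have hpC : (PP ν).real (tau u ⁻¹' C) = (PP ν).real C := by
      rw [measureReal_def, (mp_tau u).measure_preimage hCm.nullMeasurableSet, measureReal_def]
    have hind : (PP ν).real (C ∩ tau u ⁻¹' C) = (PP ν).real C * (PP ν).real C := by
      set T := s.image (fun i => ((i.1 + u, i.2) : V × Fin 3)) with hT
      have hdisj : Disjoint s T := by
        rw [Finset.disjoint_left]
        intro j hj hjT
        obtain ⟨i, hi, hij⟩ := Finset.mem_image.1 hjT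
        exact hu i hi j hj hij
      have h1 := (indep_coord (ν := ν)).indepFun_finset s T hdisj (fun i => measurable_pi_apply i)
      let g : (T → Bool) → (s → Bool) := fun y i => y ⟨(i.1.1 + u, i.1.2), by
        rw [hT]; exact Finset.mem_image_of_mem (fun i => ((i.1 + u, i.2) : V × Fin 3)) i.2⟩
      have hg : Measurable g := by fun_prop
      have h2 := h1.measure_inter_preimage_eq_mul S (g ⁻¹' S) hS (hg hS)
      have e1 : (fun (a : Om) (i : s) => a i) ⁻¹' S = C := rfl
      have e2 : (fun (a : Om) (i : T) => a i) ⁻¹' (g ⁻¹' S) = tau u ⁻¹' C := rfl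
      rw [e1, e2] at h2
      rw [measureReal_def, h2, ENNReal.toReal_mul, ← measureReal_def, ← measureReal_def, hpC]
    have hAC : |(PP ν).real C - a| ≤ ε :=
      (abs_measureReal_sub_le_measureReal_symmDiff hCm.nullMeasurableSet
        hA.nullMeasurableSet).trans hD
    have hACC : |(PP ν).real (C ∩ tau u ⁻¹' C) - a| ≤ 2 * ε := by
      refine (abs_measureReal_sub_le_measureReal_symmDiff
        (hCm.inter (hτ hCm)).nullMeasurableSet hA.nullMeasurableSet).trans ?_
      have : (C ∩ tau u ⁻¹' C) ∆ A ⊆ (C ∆ A) ∪ ((tau u ⁻¹' C) ∆ A) := by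
        intro x hx
        simp only [Set.mem_symmDiff, Set.mem_inter_iff, Set.mem_union] at hx ⊢
        tauto
      calc _ ≤ (PP ν).real ((C ∆ A) ∪ ((tau u ⁻¹' C) ∆ A)) := measureReal_mono this
        _ ≤ _ := measureReal_union_le _ _
        _ ≤ 2 * ε := by linarith
    rw [hind] at hACC
    have b1 : 0 ≤ a := measureReal_nonneg
    have b2 : a ≤ 1 := measureReal_le_one
    have b3 : 0 ≤ (PP ν).real C := measureReal_nonneg
    have b4 : (PP ν).real C ≤ 1 := measureReal_le_one
    rw [abs_le] at *
    constructor <;> nlinarith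
  have h0 : |a - a ^ 2| ≤ 0 := by
    refine le_of_forall_pos_le_add fun ε hε => ?_
    have := key (ε / 4) (by positivity)
    linarith
  have h1 : a - a ^ 2 = 0 := abs_nonpos_iff.1 h0
  have h2 : a * (1 - a) = 0 := by linarith [h1, sq a]
  rcases mul_eq_zero.1 h2 with h | h
  · left; rw [ha, measureReal_eq_zero_iff] at h; exact h
  · right
    have : a = 1 := by linarith
    rw [ha, measureReal_def] at this
    rw [← ENNReal.ofReal_toReal (measure_ne_top (PP ν) A), this]; simp

theorem ergodic_ae {p : Om → Prop} (hp : Measurable p) (hinv : ∀ u ω, p (tau u ω) ↔ p ω) :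
    (∀ᵐ ω ∂PP ν, ¬ p ω) ∨ (∀ᵐ ω ∂PP ν, p ω) := by
  rcases ergodic01 (ν := ν) (measurableSet_setOfPred.2 hp) (fun u => by ext ω; exact hinv u ω) with h | h
  · left; rw [ae_iff]; simpa using h
  · right
    rwa [← prob_compl_eq_zero_iff (measurableSet_setOfPred.2 hp)] at h

/-! ### insertion tolerance -/

open Classical in
lemma resample (i : V × Fin 3) :
    ((ν i.2).prod (PP ν)).map (fun z : Bool × Om => Function.update z.2 i z.1) = PP ν := by
  have hm : Measurable (fun z : Bool × Om => Function.update z.2 i z.1) := by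
    rw [measurable_pi_iff]
    intro j
    by_cases h : j = i
    · subst h; simpa using measurable_fst
    · simp only [Function.update_of_ne h]; fun_prop
  conv_rhs => unfold PP
  refine Measure.eq_infinitePi _ fun s t ht => ?_
  rw [Measure.map_apply hm (.pi s.countable_toSet fun _ _ ↦ ht _)]
  by_cases his : i ∈ s
  · have : (fun z : Bool × Om => Function.update z.2 i z.1) ⁻¹' (Set.pi s t) =
        (t i) ×ˢ (Set.pi (s.erase i : Finset _) t) := by
      ext ⟨b, ω⟩
      simp only [Set.mem_preimage, Set.mem_pi, Set.mem_prod, Finset.coe_erase, SetLike.mem_coe,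
        Set.mem_sdiff, Set.mem_singleton_iff]
      constructor
      · intro h
        refine ⟨by simpa using h i his, fun j hj => ?_⟩
        simpa [Function.update_of_ne hj.2] using h j hj.1
      · rintro ⟨h1, h2⟩ j hj
        by_cases hji : j = i
        · subst hji; simpa using h1
        · simpa [Function.update_of_ne hji] using h2 j ⟨hj, hji⟩
    rw [this, Measure.prod_prod]
    unfold PP
    rw [Measure.infinitePi_pi _ (fun j _ => ht j),
      Finset.mul_prod_erase s (fun j => ν j.2 (t j)) his]
  · have : (fun z : Bool × Om => Function.update z.2 i z.1) ⁻¹' (Set.pi s t) =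
        Set.univ ×ˢ (Set.pi s t) := by
      ext ⟨b, ω⟩
      simp only [Set.mem_preimage, Set.mem_pi, Set.mem_prod, Set.mem_univ, true_and]
      refine forall₂_congr fun j hj => ?_
      rw [Function.update_of_ne]
      rintro rfl; exact his hj
    rw [this, Measure.prod_prod]
    unfold PP
    rw [Measure.infinitePi_pi _ (fun j _ => ht j), measure_univ, one_mul]

open Classical in
noncomputable def phi (S : Finset (V × Fin 3)) (ω : Om) : Om := fun i => if i ∈ S then true else ω i

open Classical in
lemma qmp_update {i : V × Fin 3} (hi : ν i.2 {true} ≠ 0) :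
    Measure.QuasiMeasurePreserving (fun ω : Om => Function.update ω i true) (PP ν) (PP ν) := by
  have hm : Measurable (fun ω : Om => Function.update ω i true) := by
    rw [measurable_pi_iff]
    intro j
    by_cases h : j = i
    · subst h; simp
    · simp only [Function.update_of_ne h]; fun_prop
  have hm2 : Measurable (fun z : Bool × Om => Function.update z.2 i z.1) := by
    rw [measurable_pi_iff]
    intro j
    by_cases h : j = i
    · subst h; simpa using measurable_fst
    · simp only [Function.update_of_ne h]; fun_prop
  refine ⟨hm, ?_⟩
  refine Measure.AbsolutelyContinuous.mk fun B hB h0 => ?_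
  rw [Measure.map_apply hm hB]
  have h1 : ν i.2 {true} * PP ν ((fun ω : Om => Function.update ω i true) ⁻¹' B) ≤ 0 := by
    rw [← Measure.prod_prod, ← h0]
    conv_rhs => rw [← resample (ν := ν) i]
    rw [Measure.map_apply hm2 hB]
    refine measure_mono ?_
    rintro ⟨b, ω⟩ ⟨h1, h2⟩
    simp only [Set.mem_singleton_iff] at h1
    subst h1
    exact h2
  simpa [hi] using h1

lemma qmp_phi (S : Finset (V × Fin 3)) (hS : ∀ i ∈ S, ν i.2 {true} ≠ 0) :
    Measure.QuasiMeasurePreserving (phi S) (PP ν) (PP ν) := by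
  classical
  induction S using Finset.induction_on with
  | empty =>
    have : phi ∅ = id := by ext ω i; simp [phi]
    rw [this]; exact .id _
  | insert i S hi ih =>
    have : phi (insert i S) = (fun ω : Om => Function.update ω i true) ∘ phi S := by
      ext ω j
      by_cases h : j = i
      · subst h; simp [phi]
      · simp [phi, h]
    rw [this]
    exact (qmp_update (hS i (by simp))).comp (ih fun j hj => hS j (by simp [hj]))

lemma ae_phi {Q : Om → Prop} (hQ : ∀ᵐ ω ∂PP ν, Q ω) (K : Set (Fin 3))
    (hK : ∀ k ∈ K, ν k {true} ≠ 0) :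
    ∀ᵐ ω ∂PP ν, ∀ S : Finset (V × Fin 3), (∀ i ∈ S, i.2 ∈ K) → Q (phi S ω) := by
  rw [ae_all_iff]
  intro S
  by_cases h : ∀ i ∈ S, i.2 ∈ K
  · filter_upwards [(qmp_phi S fun i hi => hK _ (h i hi)).ae hQ] with ω hω _ using hω
  · exact .of_forall fun ω h' => absurd h' h

end erg
end DaC

namespace DaC
open Relation MeasureTheory ProbabilityTheory

/-! ### Part 5: Burton-Keane -/

def trans (u : V) (G : Gr) : Gr := fun a b => G (a + u) (b + u)

lemma rtg_map {G G' : Gr} (f : V → V) (h : ∀ a b, G a b → G' (f a) (f b)) {a b : V}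
    (hab : ReflTransGen G a b) : ReflTransGen G' (f a) (f b) := by
  induction hab with
  | refl => exact .refl
  | tail _ h2 ih => exact ih.tail (h _ _ h2)

lemma rtg_trans {u : V} {G : Gr} {a b : V} :
    ReflTransGen (trans u G) a b ↔ ReflTransGen G (a + u) (b + u) := by
  constructor
  · exact rtg_map (· + u) fun a b h => h
  · intro h
    have := rtg_map (G' := trans u G) (· - u) (fun a b h => by simpa [trans] using h) h
    simpa using this

lemma clus_trans {u : V} {G : Gr} {a : V} :
    (Clus (trans u G) a).Infinite ↔ (Clus G (a + u)).Infinite := by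
  have : Clus (trans u G) a = (Equiv.addRight u) ⁻¹' Clus G (a + u) := by
    ext z; exact rtg_trans
  rw [this]
  simp only [Set.Infinite, not_iff_not]
  exact ⟨fun h => by
    have h2 := h.image (Equiv.addRight u)
    rwa [Set.image_preimage_eq _ (Equiv.addRight u).surjective] at h2,
    fun h => h.preimage (Equiv.addRight u).injective.injOn⟩

lemma two_trans {u : V} {G : Gr} : Two (trans u G) ↔ Two G := by
  unfold Two
  simp_rw [clus_trans, rtg_trans]
  constructor
  · rintro ⟨x, y, h⟩; exact ⟨_, _, h⟩
  · rintro ⟨x, y, h⟩; exact ⟨x - u, y - u, by simpa using h⟩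

lemma some1_trans {u : V} {G : Gr} : Some1 (trans u G) ↔ Some1 G := by
  unfold Some1
  simp_rw [clus_trans]
  constructor
  · rintro ⟨x, h⟩; exact ⟨_, h⟩
  · rintro ⟨x, h⟩; exact ⟨x - u, by simpa using h⟩

lemma hasHub_trans {u w : V} {G : Gr} {m : ℕ} :
    HasHub G m w → HasHub (trans u G) m (w - u) := by
  rintro ⟨F, hF, x, h⟩
  have hmem : ∀ z, z ∈ F.image (· - u) ↔ z + u ∈ F := by
    intro z
    simp only [Finset.mem_image]
    constructor
    · rintro ⟨w, hw, rfl⟩; simpa using hw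
    · intro hz; exact ⟨_, hz, by simp⟩
  have hoff : Off (trans u G) (F.image (· - u)) = trans u (Off G F) := by
    ext a b; simp only [Off, trans, hmem]
  have hon : On (trans u G) (F.image (· - u)) = trans u (On G F) := by
    ext a b; simp only [On, trans, hmem]
  refine ⟨F.image (· - u), ?_, fun i => x i - u, ?_⟩
  · intro z hz
    have := hF ((hmem z).1 hz)
    rw [mem_box] at *
    simp at *
    omega
  · rw [hub_iff] at h ⊢
    simp only [hmem, hoff, hon, rtg_trans, clus_trans, sub_add_cancel]
    refine ⟨fun a b ha hb => h.1 _ _ ha hb, fun i => ⟨(h.2.1 i).1, ?_⟩, h.2.2.1, h.2.2.2⟩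
    obtain ⟨f, hf, hxf⟩ := (h.2.1 i).2
    exact ⟨f - u, by simpa using hf, by simpa [trans] using hxf⟩

structure BK (ν : Fin 3 → Measure Bool) (G : Om → Gr) : Prop where
  nice : ∀ ω, Nice (G ω)
  meas : MGr G
  cov : ∀ u ω, G (tau u ω) = trans u (G ω)
  ins : ∀ Q : Om → Prop, (∀ᵐ ω ∂PP ν, Q ω) → ∀ᵐ ω ∂PP ν, ∀ n, ∃ ω' F, Q ω' ∧ box n 0 ⊆ F ∧
    Fill (G ω) (G ω') F

section bk
variable {ν : Fin 3 → Measure Bool} [∀ k, IsProbabilityMeasure (ν k)] {G : Om → Gr}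

lemma finset_box (F : Finset V) : ∃ n, F ⊆ box n 0 := by
  refine ⟨F.sup fun v => v.1.natAbs + v.2.natAbs, fun v hv => ?_⟩
  have := Finset.le_sup (f := fun v : V => v.1.natAbs + v.2.natAbs) hv
  rw [mem_box]
  simp
  omega

lemma hub_count2 {G : Gr} (hG : Nice G) (m L : ℕ) (I : Finset V) (hI : I ⊆ box L 0)
    (h : ∀ i ∈ I, HasHub G m ((2 * m + 1 : ℤ) • i)) : I.card ≤ 8 * ((2 * m + 1) * L + m) + 8 := by
  classical
  choose! F hF x hx using h
  refine hub_count hG I F x hx ?_ ?_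
  · intro i hi z hz
    have h1 := hF i hi hz
    have h2 := hI hi
    rw [mem_box] at *
    simp at *
    obtain ⟨⟨a1, a2⟩, a3, a4⟩ := h2
    obtain ⟨⟨b1, b2⟩, b3, b4⟩ := h1
    refine ⟨⟨?_, ?_⟩, ?_, ?_⟩ <;> nlinarith
  · intro i hi j hj hij
    rw [Finset.disjoint_left]
    intro z hz hz'
    have h1 := hF i hi hz
    have h2 := hF j hj hz'
    rw [mem_box] at *
    simp at *
    apply hij
    have key : ∀ a b c : ℤ, (2 * (m : ℤ) + 1) * a ≤ c + m → c ≤ (2 * m + 1) * a + m → 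
      (2 * (m : ℤ) + 1) * b ≤ c + m → c ≤ (2 * m + 1) * b + m → a = b := by
      intro a b c h1 h2 h3 h4
      by_contra hne
      rcases lt_or_gt_of_ne hne with h | h
      · nlinarith
      · nlinarith
    exact Prod.ext (key _ _ z.1 h1.1.1 h1.1.2 h2.1.1 h2.1.2) (key _ _ z.2 h1.2.1 h1.2.2 h2.2.1 h2.2.2)

lemma BK.noHub (h : BK ν G) (m : ℕ) : ∀ᵐ ω ∂PP ν, ¬ HasHub (G ω) m 0 := by
  classical
  set T : V → Set Om := fun u => {ω | HasHub (G ω) m u} with hT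
  have hTm : ∀ u, MeasurableSet (T u) := fun u => measurableSet_setOfPred.2 (h.meas.hasHub m u)
  have hle : ∀ u, PP ν (T u) ≤ PP ν (T 0) := by
    intro u
    rw [← (mp_tau (ν := ν) u).measure_preimage (hTm 0).nullMeasurableSet]
    refine measure_mono fun ω hω => ?_
    show HasHub (G (tau u ω)) m 0
    rw [h.cov]; simpa using hasHub_trans (u := u) hω
  have hge : ∀ u, PP ν (T 0) ≤ PP ν (T u) := by
    intro u
    rw [← (mp_tau (ν := ν) (-u)).measure_preimage (hTm u).nullMeasurableSet]
    refine measure_mono fun ω hω => ?_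
    show HasHub (G (tau (-u) ω)) m u
    rw [h.cov]; simpa using hasHub_trans (u := -u) hω
  have heq : ∀ u, PP ν (T u) = PP ν (T 0) := fun u => le_antisymm (hle u) (hge u)
  have hsum : ∀ L : ℕ, ((2 * L + 1) ^ 2 : ℕ) * PP ν (T 0) ≤
      ((8 * ((2 * m + 1) * L + m) + 8 : ℕ) : ENNReal) := by
    intro L
    calc ((2 * L + 1) ^ 2 : ℕ) * PP ν (T 0)
        = ∑ i ∈ box L 0, PP ν (T ((2 * m + 1 : ℤ) • i)) := by
          simp_rw [heq]; rw [Finset.sum_const, card_box, nsmul_eq_mul]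
      _ = ∑ i ∈ box L 0, ∫⁻ ω, (T ((2 * m + 1 : ℤ) • i)).indicator 1 ω ∂PP ν := by
          refine Finset.sum_congr rfl fun i _ => ?_
          rw [lintegral_indicator_one (hTm _)]
      _ = ∫⁻ ω, ∑ i ∈ box L 0, (T ((2 * m + 1 : ℤ) • i)).indicator 1 ω ∂PP ν := by
          rw [lintegral_finsetSum]
          intro i _
          exact measurable_one.indicator (hTm _)
      _ ≤ ∫⁻ ω, ((8 * ((2 * m + 1) * L + m) + 8 : ℕ) : ENNReal) ∂PP ν := by
          refine lintegral_mono fun ω => ?_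
          have e : ∑ i ∈ box L 0, (T ((2 * m + 1 : ℤ) • i)).indicator (1 : Om → ENNReal) ω =
              (((box L 0).filter fun i => HasHub (G ω) m ((2 * m + 1 : ℤ) • i)).card : ENNReal) := by
            rw [Finset.card_filter, Nat.cast_sum]
            refine Finset.sum_congr rfl fun i _ => ?_
            simp [Set.indicator, hT]
          rw [e]
          exact Nat.cast_le.2 <| hub_count2 (h.nice ω) m L _ (Finset.filter_subset _ _)
            fun i hi => (Finset.mem_filter.1 hi).2
      _ = _ := by simp
  have h0 : PP ν (T 0) = 0 := by
    by_contra hne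
    set t := (PP ν).real (T 0) with ht
    have htpos : 0 < t := by
      rw [ht, measureReal_def]; exact ENNReal.toReal_pos hne (measure_ne_top _ _)
    have hr : ∀ L : ℕ, ((2 * L + 1) ^ 2 : ℝ) * t ≤ 8 * ((2 * m + 1) * L + m) + 8 := by
      intro L
      have := ENNReal.toReal_mono (ENNReal.natCast_ne_top _) (hsum L)
      rw [ENNReal.toReal_mul, ← measureReal_def, ENNReal.toReal_natCast, ENNReal.toReal_natCast,
        ← ht] at this
      exact_mod_cast this
    obtain ⟨L, hL⟩ := exists_nat_gt ((2 * m + 1 : ℝ) * 8 / t)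
    rw [div_lt_iff₀ htpos] at hL
    have := hr L
    have hLp : (0 : ℝ) ≤ L := by positivity
    have hmp : (0 : ℝ) ≤ m := by positivity
    nlinarith [mul_nonneg hLp hmp, mul_nonneg hLp htpos.le]
  rw [ae_iff]; simpa using h0

lemma BK.noThree (h : BK ν G) : ∀ᵐ ω ∂PP ν, ¬ ∃ x : Fin 3 → V, (∀ i, (Clus (G ω) (x i)).Infinite) ∧
    ∀ i j, i ≠ j → ¬ ReflTransGen (G ω) (x i) (x j) := by
  filter_upwards [h.ins (fun ω => ∀ m, ¬ HasHub (G ω) m 0) (ae_all_iff.2 h.noHub)] with ω hω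
  rintro ⟨x, h1, h2⟩
  obtain ⟨n, hn⟩ := finset_box (Finset.univ.image x)
  obtain ⟨ω', F, hQ, hF, hfill⟩ := hω n
  obtain ⟨y, hy⟩ := fill_hub (h.nice ω) hfill x h1 h2
    fun i => ⟨x i, hF (hn (Finset.mem_image_of_mem x (Finset.mem_univ i))), .refl⟩
  obtain ⟨m, hm⟩ := finset_box F
  exact hQ m ⟨F, hm, y, hy⟩

theorem BK.unique (h : BK ν G) : ∀ᵐ ω ∂PP ν, ¬ Two (G ω) := by
  rcases ergodic_ae (ν := ν) h.meas.two (fun u ω => by rw [h.cov]; exact two_trans) with h1 | h1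
  · exact h1
  · exfalso
    obtain ⟨ω, hω, h2, h3⟩ := ((h.ins _ h1).and (h1.and h.noThree)).exists
    obtain ⟨x, y, hx, hy, hxy⟩ := h2
    obtain ⟨n, hn⟩ := finset_box {x, y}
    obtain ⟨ω', F, hQ, hF, hfill⟩ := hω n
    have hxF : x ∈ F := hF (hn (by simp))
    have hyF : y ∈ F := hF (hn (by simp))
    have hs := fun {a b} => rtg_symm (a := a) (b := b) (h.nice ω).1
    obtain ⟨a, b, ha, hb, hab⟩ := hQ
    refine hab (fill_unique (h.nice ω') hfill ?_ ha hb)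
    intro z hz
    by_contra hcon
    push Not at hcon
    refine h3 ⟨![x, y, z], ?_, ?_⟩
    · intro i; fin_cases i <;> assumption
    · intro i j hij
      fin_cases i <;> fin_cases j <;> simp at hij ⊢
      · exact hxy
      · exact fun hh => hcon x hxF (hs hh)
      · exact fun hh => hxy (hs hh)
      · exact fun hh => hcon y hyF (hs hh)
      · exact fun hh => hcon x hxF hh
      · exact fun hh => hcon y hyF hh

theorem BK.some01 (h : BK ν G) : (∀ᵐ ω ∂PP ν, ¬ Some1 (G ω)) ∨ ∀ᵐ ω ∂PP ν, Some1 (G ω) :=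
  ergodic_ae (ν := ν) h.meas.some1 (fun u ω => by rw [h.cov]; exact some1_trans)

end bk
end DaC

namespace DaC
open Relation MeasureTheory ProbabilityTheory

/-! ### Part 6: bond percolation -/

def e1 : V := (1, 0)
def e2 : V := (0, 1)

def bond (ω : Om) : Gr := fun a b =>
  (b = a + e1 ∧ ω (a, 0) = true) ∨ (b = a + e2 ∧ ω (a, 1) = true) ∨
  (a = b + e1 ∧ ω (b, 0) = true) ∨ (a = b + e2 ∧ ω (b, 1) = true)

lemma bond_symm (ω : Om) (a b : V) (h : bond ω a b) : bond ω b a := by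
  unfold bond at *; tauto

lemma bond_nice (ω : Om) : Nice (bond ω) := by
  refine ⟨bond_symm ω, fun a b h => ?_⟩
  unfold SqAdj
  rcases h with ⟨rfl, _⟩ | ⟨rfl, _⟩ | ⟨rfl, _⟩ | ⟨rfl, _⟩ <;> simp [e1, e2]

lemma measurable_coord (i : V × Fin 3) : Measurable fun ω : Om => ω i = true := by
  have : MeasurableSet ((fun ω : Om => ω i) ⁻¹' {true}) := measurable_pi_apply i trivial
  exact measurableSet_setOfPred.1 this

lemma bond_meas : MGr bond := fun a b =>
  (measurable_const.and (measurable_coord _)).or <|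
  (measurable_const.and (measurable_coord _)).or <|
  (measurable_const.and (measurable_coord _)).or (measurable_const.and (measurable_coord _))

lemma bond_cov (u : V) (ω : Om) : bond (tau u ω) = trans u (bond ω) := by
  ext a b
  have h1 : ∀ e : V, (b = a + e ↔ b + u = a + u + e) := fun e => by
    constructor
    · rintro rfl; ring
    · intro h; have : b + u = (a + e) + u := by rw [h]; ring
      exact add_right_cancel this
  have h2 : ∀ e : V, (a = b + e ↔ a + u = b + u + e) := fun e => by
    constructor
    · rintro rfl; ring
    · intro h; have : a + u = (b + e) + u := by rw [h]; ring
      exact add_right_cancel this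
  simp only [bond, trans, tau, ← h1, ← h2]

lemma box_connected {G : Gr} (hG : ∀ a b, G a b → G b a) (n : ℕ)
    (h1 : ∀ a ∈ box n 0, a + e1 ∈ box n 0 → G a (a + e1))
    (h2 : ∀ a ∈ box n 0, a + e2 ∈ box n 0 → G a (a + e2)) :
    ∀ a ∈ box n 0, ∀ b ∈ box n 0, ReflTransGen (On G (box n 0)) a b := by
  have hs : ∀ a b, On G (box n 0) a b → On G (box n 0) b a := fun a b h => ⟨hG _ _ h.1, h.2.2, h.2.1⟩
  have key : ∀ k : ℕ, ∀ a ∈ box n 0, a.1.natAbs + a.2.natAbs = k →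
      ReflTransGen (On G (box n 0)) a 0 := by
    intro k
    induction k with
    | zero =>
      intro a _ hk
      have : a = 0 := Prod.ext (by simp; omega) (by simp; omega)
      rw [this]
    | succ k ih =>
      intro a ha hk
      have ha' := mem_box.1 ha
      simp at ha'
      by_cases c1 : 0 < a.1
      · have hb : a - e1 ∈ box n 0 := by rw [mem_box]; simp [e1]; omega
        refine .head (hs _ _ ⟨?_, hb, ha⟩) (ih _ hb (by simp [e1]; omega))
        have := h1 (a - e1) hb (by simpa using ha)
        simpa using this
      · by_cases c2 : a.1 < 0
        · have hb : a + e1 ∈ box n 0 := by rw [mem_box]; simp [e1]; omega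
          exact .head ⟨h1 _ ha hb, ha, hb⟩ (ih _ hb (by simp [e1]; omega))
        · by_cases c3 : 0 < a.2
          · have hb : a - e2 ∈ box n 0 := by rw [mem_box]; simp [e2]; omega
            refine .head (hs _ _ ⟨?_, hb, ha⟩) (ih _ hb (by simp [e2]; omega))
            have := h2 (a - e2) hb (by simpa using ha)
            simpa using this
          · have hb : a + e2 ∈ box n 0 := by rw [mem_box]; simp [e2]; omega
            exact .head ⟨h2 _ ha hb, ha, hb⟩ (ih _ hb (by simp [e2]; omega))
  intro a ha b hb
  exact (key _ a ha rfl).trans (rtg_symm hs (key _ b hb rfl))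

noncomputable def fair : Measure Bool :=
  (2⁻¹ : ENNReal) • Measure.dirac true + (2⁻¹ : ENNReal) • Measure.dirac false

lemma fair_singleton (b : Bool) : fair {b} = 2⁻¹ := by
  cases b <;> simp [fair]

instance : IsProbabilityMeasure fair := by
  constructor
  simp [fair, ENNReal.inv_two_add_inv_two]

noncomputable abbrev PF : Measure Om := PP fun _ => fair

lemma bond_BK : BK (fun _ => fair) bond where
  nice := bond_nice
  meas := bond_meas
  cov := bond_cov
  ins := by
    intro Q hQ
    filter_upwards [ae_phi hQ Set.univ (fun k _ => by simp [fair_singleton])] with ω hω n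
    refine ⟨phi (box n 0 ×ˢ Finset.univ) ω, box n 0, hω _ (by simp), subset_rfl, ?_, ?_, ?_⟩
    · have : ∀ i, ω i = true → phi (box n 0 ×ˢ Finset.univ) ω i = true := by
        intro i hi; unfold phi; split_ifs <;> simp [hi]
      rintro a b (⟨h1, h2⟩ | ⟨h1, h2⟩ | ⟨h1, h2⟩ | ⟨h1, h2⟩)
      · exact .inl ⟨h1, this _ h2⟩
      · exact .inr (.inl ⟨h1, this _ h2⟩)
      · exact .inr (.inr (.inl ⟨h1, this _ h2⟩))
      · exact .inr (.inr (.inr ⟨h1, this _ h2⟩))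
    · intro a b ha hb
      have : ∀ c k, c ∉ box n 0 → phi (box n 0 ×ˢ Finset.univ) ω (c, k) = ω (c, k) := by
        intro c k hc; unfold phi; simp [hc]
      unfold bond
      rw [this a 0 ha, this a 1 ha, this b 0 hb, this b 1 hb]
      exact id
    · refine box_connected (bond_symm _) n (fun a ha _ => .inl ⟨rfl, ?_⟩)
        (fun a ha _ => .inr (.inl ⟨rfl, ?_⟩)) <;> simp [phi, ha]

/-! ### Harris inequality -/

def Local (s : Finset (V × Fin 3)) (A : Om → Prop) : Prop :=
  ∀ ω ω', (∀ i ∈ s, ω i = ω' i) → A ω → A ω'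

def Incr (A : Om → Prop) : Prop := ∀ ω ω', (∀ i, ω i = true → ω' i = true) → A ω → A ω'

open Classical in
noncomputable def extd (s : Finset (V × Fin 3)) (y : s → Bool) : Om :=
  fun i => if h : i ∈ s then y ⟨i, h⟩ else false

lemma Local.iff {s : Finset (V × Fin 3)} {A : Om → Prop} (hA : Local s A) (ω : Om) :
    A ω ↔ A (extd s fun i => ω i) := by
  constructor <;> apply hA <;> intro i hi <;> simp [extd, hi]

lemma Local.meas {s : Finset (V × Fin 3)} {A : Om → Prop} (hA : Local s A) :
    MeasurableSet {ω | A ω} := by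
  have : {ω | A ω} = (fun (ω : Om) (i : s) => ω i) ⁻¹' {y | A (extd s y)} := by
    ext ω; exact hA.iff ω
  rw [this]
  have hm : Measurable (fun (ω : Om) (i : s) => ω i) := by fun_prop
  exact hm (Set.toFinite _).measurableSet

open Classical in
lemma Local.prob {s : Finset (V × Fin 3)} {A : Om → Prop} (hA : Local s A) :
    PF.real {ω | A ω} = (2⁻¹ : ℝ) ^ s.card * ∑ y : s → Bool, if A (extd s y) then 1 else 0 := by
  have : {ω | A ω} = s.restrict ⁻¹' {y : s → Bool | A (extd s y)} := by
    ext ω; exact hA.iff ω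
  have hms : MeasurableSet {y : s → Bool | A (extd s y)} := (Set.toFinite _).measurableSet
  rw [measureReal_def, this]
  unfold PF PP
  rw [← Measure.map_apply (Finset.measurable_restrict s) hms, Measure.infinitePi_map_restrict]
  have h2 : {y : s → Bool | A (extd s y)} = ↑(Finset.univ.filter fun y : s → Bool => A (extd s y)) := by
    ext y; simp
  rw [h2, ← sum_measure_singleton, ENNReal.toReal_sum (fun _ _ => measure_ne_top _ _), Finset.mul_sum,
    Finset.sum_filter]
  refine Finset.sum_congr rfl fun y _ => ?_
  split_ifs
  · rw [Measure.pi_singleton]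
    simp [fair_singleton]
  · simp

lemma extd_mono {s : Finset (V × Fin 3)} {y z : s → Bool} (h : y ≤ z) (i : V × Fin 3)
    (hi : extd s y i = true) : extd s z i = true := by
  unfold extd at *
  split_ifs at * with h1
  have := h ⟨i, h1⟩
  rw [hi] at this
  exact Bool.eq_true_of_true_le this

lemma harris {s : Finset (V × Fin 3)} {A B : Om → Prop} (hA : Local s A) (hB : Local s B)
    (iA : Incr A) (iB : Incr B) :
    PF.real {ω | A ω} * PF.real {ω | B ω} ≤ PF.real {ω | A ω ∧ B ω} := by
  classical
  have hAB : Local s fun ω => A ω ∧ B ω := fun ω ω' h h' => ⟨hA _ _ h h'.1, hB _ _ h h'.2⟩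
  rw [hA.prob, hB.prob, hAB.prob]
  have mono : ∀ C : Om → Prop, Incr C →
      Monotone (fun y : s → Bool => if C (extd s y) then (1 : ℝ) else 0) := by
    intro C hC y z hyz
    have := hC _ _ (extd_mono hyz)
    by_cases c : C (extd s y)
    · simp [c, this c]
    · simp only [c, if_false]; split_ifs <;> simp
  have pos : ∀ C : Om → Prop, (0 : (s → Bool) → ℝ) ≤ (fun y : s → Bool => if C (extd s y) then (1 : ℝ) else 0) := by
    intro C y; dsimp only; split_ifs <;> simp
  have := fkg (μ := fun _ : s → Bool => (1 : ℝ)) _ _ (fun _ => zero_le_one) (pos A) (pos B)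
    (mono A iA) (mono B iB) (fun _ _ => le_rfl)
  have hcard : ∑ _y : s → Bool, (1 : ℝ) = 2 ^ s.card := by simp
  simp only [one_mul] at this
  rw [hcard] at this
  rw [show (∑ y : s → Bool, @ite ℝ (A (extd s y) ∧ B (extd s y)) (Classical.propDecidable _) 1 0) =
      ∑ y : s → Bool, (if A (extd s y) then (1 : ℝ) else 0) * (if B (extd s y) then 1 else 0) from
    Finset.sum_congr rfl fun y _ => by
      by_cases a : A (extd s y) <;> by_cases b : B (extd s y) <;> simp [a, b]]
  set X := ∑ y : s → Bool, (if A (extd s y) then (1 : ℝ) else 0)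
  set Y := ∑ y : s → Bool, (if B (extd s y) then (1 : ℝ) else 0)
  have h2 : (2⁻¹ : ℝ) ^ s.card * 2 ^ s.card = 1 := by rw [← mul_pow]; norm_num
  calc (2⁻¹ : ℝ) ^ s.card * X * ((2⁻¹ : ℝ) ^ s.card * Y)
      = (2⁻¹ : ℝ) ^ s.card * (2⁻¹ : ℝ) ^ s.card * (X * Y) := by ring
    _ ≤ (2⁻¹ : ℝ) ^ s.card * (2⁻¹ : ℝ) ^ s.card * (2 ^ s.card * _) := by gcongr
    _ = ((2⁻¹ : ℝ) ^ s.card * 2 ^ s.card) * ((2⁻¹ : ℝ) ^ s.card * _) := by ring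
    _ = _ := by rw [h2, one_mul]

lemma harris_or {s : Finset (V × Fin 3)} {A B : Om → Prop} (hA : Local s A) (hB : Local s B)
    (iA : Incr A) (iB : Incr B) :
    (1 - PF.real {ω | A ω}) * (1 - PF.real {ω | B ω}) ≤ 1 - PF.real {ω | A ω ∨ B ω} := by
  have h1 := harris hA hB iA iB
  have h2 : PF.real {ω | A ω ∨ B ω} + PF.real {ω | A ω ∧ B ω} =
    PF.real {ω | A ω} + PF.real {ω | B ω} := measureReal_union_add_inter hB.meas
  nlinarith

lemma Local.or {s : Finset (V × Fin 3)} {A B : Om → Prop} (hA : Local s A) (hB : Local s B) :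
    Local s fun ω => A ω ∨ B ω := fun ω ω' h h' => h'.imp (hA _ _ h) (hB _ _ h)

lemma Incr.or {A B : Om → Prop} (hA : Incr A) (hB : Incr B) :
    Incr fun ω => A ω ∨ B ω := fun ω ω' h h' => h'.imp (hA _ _ h) (hB _ _ h)

end DaC

namespace DaC
open Relation MeasureTheory ProbabilityTheory

/-! ### Part 7: no percolation at one half -/

def Ev (d : V) (k n : ℕ) (ω : Om) : Prop := ∃ x ∈ box k 0, ∃ v,
  ReflTransGen (On (bond ω) (box n 0)) x v ∧ v ∈ box n 0 ∧ bond ω v (v + d) ∧ v + d ∉ box n 0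

def Hev (d : V) (n : ℕ) (ω : Om) : Prop := ∃ v w, v ∈ box n 0 ∧ w ∈ box n 0 ∧
  ReflTransGen (On (bond ω) (box n 0)) v w ∧ bond ω v (v - d) ∧ v - d ∉ box n 0 ∧
  bond ω w (w + d) ∧ w + d ∉ box n 0

noncomputable def locS (n : ℕ) : Finset (V × Fin 3) := box (n + 1) 0 ×ˢ Finset.univ

lemma bond_local {n : ℕ} {ω ω' : Om} (h : ∀ i ∈ locS n, ω i = ω' i) {v w : V} (hv : v ∈ box n 0)
    (hb : bond ω v w) : bond ω' v w := by
  have hw : w ∈ box (n + 1) 0 := by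
    have := sqadj_cases ((bond_nice ω).2 _ _ hb)
    rw [mem_box] at *; push_cast; simp at *; omega
  have hv' : v ∈ box (n + 1) 0 := by rw [mem_box] at *; push_cast; simp at *; omega
  have hm : ∀ u ∈ box (n + 1) 0, ∀ k, ω (u, k) = ω' (u, k) := fun u hu k => h _ (by simp [locS, hu])
  unfold bond at *
  rwa [← hm v hv', ← hm v hv', ← hm w hw, ← hm w hw]

lemma on_local {n : ℕ} {ω ω' : Om} (h : ∀ i ∈ locS n, ω i = ω' i) {v w : V}
    (hb : ReflTransGen (On (bond ω) (box n 0)) v w) : ReflTransGen (On (bond ω') (box n 0)) v w :=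
  rtg_mono (fun _ _ h' => ⟨bond_local h h'.2.1 h'.1, h'.2⟩) hb

lemma Ev_local (d : V) (k n : ℕ) : Local (locS n) (Ev d k n) := by
  rintro ω ω' h ⟨x, hx, v, h1, h2, h3, h4⟩
  exact ⟨x, hx, v, on_local h h1, h2, bond_local h h2 h3, h4⟩

lemma Hev_local (d : V) (n : ℕ) : Local (locS n) (Hev d n) := by
  rintro ω ω' h ⟨v, w, h1, h2, h3, h4, h5, h6, h7⟩
  exact ⟨v, w, h1, h2, on_local h h3, bond_local h h1 h4, h5, bond_local h h2 h6, h7⟩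

lemma bond_mono {ω ω' : Om} (h : ∀ i, ω i = true → ω' i = true) (a b : V) (hb : bond ω a b) :
    bond ω' a b := by
  rcases hb with ⟨h1, h2⟩ | ⟨h1, h2⟩ | ⟨h1, h2⟩ | ⟨h1, h2⟩
  · exact .inl ⟨h1, h _ h2⟩
  · exact .inr (.inl ⟨h1, h _ h2⟩)
  · exact .inr (.inr (.inl ⟨h1, h _ h2⟩))
  · exact .inr (.inr (.inr ⟨h1, h _ h2⟩))

lemma Ev_incr (d : V) (k n : ℕ) : Incr (Ev d k n) := by
  rintro ω ω' h ⟨x, hx, v, h1, h2, h3, h4⟩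
  exact ⟨x, hx, v, rtg_mono (fun _ _ h' => ⟨bond_mono h _ _ h'.1, h'.2⟩) h1, h2,
    bond_mono h _ _ h3, h4⟩

/-! rotation -/

def rot (v : V) : V := (-v.2, v.1)

def re (i : V × Fin 3) : V × Fin 3 :=
  if i.2 = 0 then (rot i.1, 1) else if i.2 = 1 then (rot i.1 - e1, 0) else i

lemma rot_inj {a b : V} (h : rot a = rot b) : a = b := by
  simp only [rot, Prod.mk.injEq, neg_inj] at h
  exact Prod.ext h.2 h.1

lemma re_inj : Function.Injective re := by
  rintro ⟨a, k⟩ ⟨b, l⟩ h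
  unfold re at h
  fin_cases k <;> fin_cases l <;> simp [Prod.mk.injEq] at h ⊢
  · exact rot_inj h
  · exact rot_inj h
  · exact h

def Rt (ω : Om) : Om := fun i => ω (re i)

lemma mp_Rt : MeasurePreserving Rt PF PF := mp_reindex re_inj fun _ => rfl

lemma rot_add (a b : V) : rot (a + b) = rot a + rot b := by
  simp [rot, Prod.ext_iff]; ring

lemma rot_sub (a b : V) : rot (a - b) = rot a - rot b := by
  simp [rot, Prod.ext_iff]; ring

lemma rot_e1 : rot e1 = e2 := by simp [rot, e1, e2]
lemma rot_e2 : rot e2 = -e1 := by simp [rot, e1, e2]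

lemma rot_box {n : ℕ} {a : V} : rot a ∈ box n 0 ↔ a ∈ box n 0 := by
  rw [mem_box, mem_box]; simp [rot]; omega

lemma bond_Rt {ω : Om} {a b : V} (h : bond (Rt ω) a b) : bond ω (rot a) (rot b) := by
  rcases h with ⟨rfl, h2⟩ | ⟨rfl, h2⟩ | ⟨rfl, h2⟩ | ⟨rfl, h2⟩
  · exact .inr (.inl ⟨by rw [rot_add, rot_e1], h2⟩)
  · exact .inr (.inr (.inl ⟨by rw [rot_add, rot_e2]; simp, by
      rw [rot_add, rot_e2, ← sub_eq_add_neg]; exact h2⟩))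
  · exact .inr (.inr (.inr ⟨by rw [rot_add, rot_e1], h2⟩))
  · exact .inl ⟨by rw [rot_add, rot_e2]; simp, by
      rw [rot_add, rot_e2, ← sub_eq_add_neg]; exact h2⟩

lemma on_Rt {ω : Om} {n : ℕ} {a b : V} (h : ReflTransGen (On (bond (Rt ω)) (box n 0)) a b) :
    ReflTransGen (On (bond ω) (box n 0)) (rot a) (rot b) :=
  rtg_map rot (fun _ _ h => ⟨bond_Rt h.1, rot_box.2 h.2.1, rot_box.2 h.2.2⟩) h

lemma Ev_Rt {d : V} {k n : ℕ} {ω : Om} (h : Ev d k n (Rt ω)) : Ev (rot d) k n ω := by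
  obtain ⟨x, hx, v, h1, h2, h3, h4⟩ := h
  refine ⟨rot x, rot_box.2 hx, rot v, on_Rt h1, rot_box.2 h2, ?_, ?_⟩
  · rw [← rot_add]; exact bond_Rt h3
  · rw [← rot_add, rot_box]; exact h4

lemma Hev_Rt {d : V} {n : ℕ} {ω : Om} (h : Hev d n (Rt ω)) : Hev (rot d) n ω := by
  obtain ⟨v, w, h1, h2, h3, h4, h5, h6, h7⟩ := h
  refine ⟨rot v, rot w, rot_box.2 h1, rot_box.2 h2, on_Rt h3, ?_, ?_, ?_, ?_⟩
  · rw [← rot_sub]; exact bond_Rt h4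
  · rw [← rot_sub, rot_box]; exact h5
  · rw [← rot_add]; exact bond_Rt h6
  · rw [← rot_add, rot_box]; exact h7

lemma Ev_le (d : V) (k n : ℕ) : PF.real {ω | Ev d k n ω} ≤ PF.real {ω | Ev (rot d) k n ω} := by
  rw [← mp_Rt.measureReal_preimage (Ev_local d k n).meas.nullMeasurableSet]
  exact measureReal_mono fun ω h => Ev_Rt h

lemma Hev_le (d : V) (n : ℕ) : PF.real {ω | Hev d n ω} ≤ PF.real {ω | Hev (rot d) n ω} := by
  rw [← mp_Rt.measureReal_preimage (Hev_local d n).meas.nullMeasurableSet]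
  exact measureReal_mono fun ω h => Hev_Rt h

lemma rot4 (d : V) : rot (rot (rot (rot d))) = d := by simp [rot]

lemma Ev_eq (d : V) (k n : ℕ) : PF.real {ω | Ev (rot d) k n ω} = PF.real {ω | Ev d k n ω} := by
  apply le_antisymm _ (Ev_le d k n)
  have h1 := Ev_le (rot d) k n
  have h2 := Ev_le (rot (rot d)) k n
  have h3 := Ev_le (rot (rot (rot d))) k n
  rw [rot4] at h3
  linarith

/-! exits -/

lemma first_exit {G : Gr} {F : Finset V} {x z : V} (h : ReflTransGen G x z) (hx : x ∈ F)
    (hz : z ∉ F) : ∃ v w, ReflTransGen (On G F) x v ∧ v ∈ F ∧ G v w ∧ w ∉ F := by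
  induction h using ReflTransGen.head_induction_on with
  | refl => exact absurd hx hz
  | @head a c hac hcb ih =>
    by_cases hc : c ∈ F
    · obtain ⟨v, w, h1, h2⟩ := ih hc
      exact ⟨v, w, .head ⟨hac, hx, hc⟩ h1, h2⟩
    · exact ⟨a, c, .refl, hx, hac, hc⟩

lemma exit_Ev {k n : ℕ} (hkn : k ≤ n) {ω : Om} {x : V} (hx : x ∈ box k 0)
    (hi : (Clus (bond ω) x).Infinite) :
    (Ev e1 k n ω ∨ Ev (rot e1) k n ω) ∨ (Ev (rot (rot e1)) k n ω ∨ Ev (rot (rot (rot e1))) k n ω) := by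
  have hx' : x ∈ box n 0 := by rw [mem_box] at *; simp at *; omega
  obtain ⟨z, hz, hzn⟩ := hi.exists_notMem_finset (box n 0)
  obtain ⟨v, w, h1, h2, h3, h4⟩ := first_exit hz hx' hzn
  have hw : w = v + e1 ∨ w = v + rot e1 ∨ w = v + rot (rot e1) ∨ w = v + rot (rot (rot e1)) := by
    have := sqadj_cases ((bond_nice ω).2 _ _ h3)
    simp [rot, e1, Prod.ext_iff]
    omega
  rcases hw with rfl | rfl | rfl | rfl
  · exact .inl (.inl ⟨x, hx, v, h1, h2, h3, h4⟩)
  · exact .inl (.inr ⟨x, hx, v, h1, h2, h3, h4⟩)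
  · exact .inr (.inl ⟨x, hx, v, h1, h2, h3, h4⟩)
  · exact .inr (.inr ⟨x, hx, v, h1, h2, h3, h4⟩)

def Uev (x y : V) (n : ℕ) (ω : Om) : Prop :=
  (∃ z, z ∉ box n 0 ∧ ReflTransGen (bond ω) x z) ∧ (∃ z, z ∉ box n 0 ∧ ReflTransGen (bond ω) y z) ∧
  ¬ ReflTransGen (On (bond ω) (box n 0)) x y

lemma Uev_meas (x y : V) (n : ℕ) : MeasurableSet {ω | Uev x y n ω} :=
  measurableSet_setOfPred.2 <|
  (Measurable.exists fun z => measurable_const.and (bond_meas.rtg x z)).and <|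
  (Measurable.exists fun z => measurable_const.and (bond_meas.rtg y z)).and
    ((bond_meas.on _).rtg x y).not

lemma box_mono {m n : ℕ} (h : m ≤ n) : box m 0 ⊆ box n 0 := by
  intro v hv; rw [mem_box] at *; simp at *; omega

lemma Uev_anti {x y : V} {m n : ℕ} (h : m ≤ n) {ω : Om} (hu : Uev x y n ω) : Uev x y m ω := by
  obtain ⟨⟨z, h1, h2⟩, ⟨z', h3, h4⟩, h5⟩ := hu
  exact ⟨⟨z, fun hh => h1 (box_mono h hh), h2⟩, ⟨z', fun hh => h3 (box_mono h hh), h4⟩,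
    fun hh => h5 (rtg_mono (fun _ _ h' => ⟨h'.1, box_mono h h'.2.1, box_mono h h'.2.2⟩) hh)⟩

lemma rtg_in_box {G : Gr} {x y : V} (h : ReflTransGen G x y) :
    ∃ n, ReflTransGen (On G (box n 0)) x y := by
  induction h with
  | refl => exact ⟨0, .refl⟩
  | @tail b c _ h2 ih =>
    obtain ⟨n, hn⟩ := ih
    obtain ⟨m, hm⟩ := finset_box {b, c}
    refine ⟨max n m, .tail (rtg_mono (fun _ _ h' => ⟨h'.1, box_mono (le_max_left n m) h'.2.1,
      box_mono (le_max_left n m) h'.2.2⟩) hn) ⟨h2, ?_, ?_⟩⟩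
    · exact box_mono (le_max_right n m) (hm (by simp))
    · exact box_mono (le_max_right n m) (hm (by simp))

lemma inf_of_exits {G : Gr} {x : V} (h : ∀ n, ∃ z, z ∉ box n 0 ∧ ReflTransGen G x z) :
    (Clus G x).Infinite := by
  rw [infinite_iff]
  intro F
  obtain ⟨n, hn⟩ := finset_box F
  obtain ⟨z, h1, h2⟩ := h n
  exact ⟨z, fun hh => h1 (hn hh), h2⟩

lemma Uev_two {x y : V} {ω : Om} (h : ∀ n, Uev x y n ω) : Two (bond ω) := by
  refine ⟨x, y, inf_of_exits fun n => (h n).1, inf_of_exits fun n => (h n).2.1, fun hxy => ?_⟩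
  obtain ⟨n, hn⟩ := rtg_in_box hxy
  exact (h n).2.2 hn

lemma Uev_tendsto (x y : V) :
    Filter.Tendsto (fun n => PF.real {ω | Uev x y n ω}) Filter.atTop (nhds 0) := by
  have h := tendsto_measure_iInter_atTop (μ := PF) (s := fun n => {ω | Uev x y n ω})
    (fun n => (Uev_meas x y n).nullMeasurableSet) (fun m n h ω hω => Uev_anti h hω)
    ⟨0, measure_ne_top _ _⟩
  have h0 : PF (⋂ n, {ω | Uev x y n ω}) = 0 := by
    refine measure_mono_null (fun ω hω => ?_) (ae_iff.1 bond_BK.unique)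
    simp only [Set.mem_iInter, Set.mem_ofPred_eq] at hω
    exact not_not.2 (Uev_two hω)
  rw [h0] at h
  have h2 := (ENNReal.tendsto_toReal ENNReal.zero_ne_top).comp h
  rw [ENNReal.toReal_zero] at h2
  exact h2

lemma Hev_of {k n : ℕ} (hkn : k ≤ n) {d : V} {ω : Om} (h1 : Ev d k n ω) (h2 : Ev (-d) k n ω)
    (hU : ∀ x ∈ box k 0, ∀ y ∈ box k 0, ¬ Uev x y n ω) : Hev d n ω := by
  obtain ⟨x, hx, v, a1, a2, a3, a4⟩ := h1
  obtain ⟨y, hy, w, b1, b2, b3, b4⟩ := h2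
  have hon : ∀ a b, On (bond ω) (box n 0) a b → On (bond ω) (box n 0) b a :=
    fun a b h => ⟨bond_symm ω _ _ h.1, h.2.2, h.2.1⟩
  have hxy : ReflTransGen (On (bond ω) (box n 0)) x y := by
    by_contra hcon
    exact hU x hx y hy ⟨⟨_, a4, (rtg_on a1).tail a3⟩, ⟨_, b4, (rtg_on b1).tail b3⟩, hcon⟩
  rw [← sub_eq_add_neg] at b3 b4
  exact ⟨w, v, b2, a2, (rtg_symm hon b1).trans ((rtg_symm hon hxy).trans a1), b3, b4, a3, a4⟩

lemma ball_prob (h : ∀ᵐ ω ∂PF, Some1 (bond ω)) (ε : ℝ) (hε : 0 < ε) :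
    ∃ k : ℕ, PF.real {ω | ¬ ∃ x ∈ box k 0, (Clus (bond ω) x).Infinite} < ε := by
  have hm : ∀ k : ℕ, MeasurableSet {ω | ¬ ∃ x, x ∈ box k 0 ∧ (Clus (bond ω) x).Infinite} := fun k =>
    measurableSet_setOfPred.2 (Measurable.exists fun x => measurable_const.and (bond_meas.inf x)).not
  have h' := tendsto_measure_iInter_atTop (μ := PF)
    (s := fun k : ℕ => {ω | ¬ ∃ x ∈ box k 0, (Clus (bond ω) x).Infinite})
    (fun n => (hm n).nullMeasurableSet)
    (fun m n hmn ω hω ⟨x, hx, hi⟩ => hω ⟨x, box_mono hmn hx, hi⟩)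
    ⟨0, measure_ne_top _ _⟩
  have h0 : PF (⋂ k : ℕ, {ω | ¬ ∃ x ∈ box k 0, (Clus (bond ω) x).Infinite}) = 0 := by
    refine measure_mono_null (fun ω hω => ?_) (ae_iff.1 h)
    simp only [Set.mem_iInter, Set.mem_ofPred_eq] at hω
    rintro ⟨x, hx⟩
    obtain ⟨n, hn⟩ := finset_box {x}
    exact hω n ⟨x, hn (by simp), hx⟩
  rw [h0] at h'
  have h2 := (ENNReal.tendsto_toReal ENNReal.zero_ne_top).comp h'
  rw [ENNReal.toReal_zero] at h2
  exact (h2.eventually (gt_mem_nhds hε)).exists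

lemma crossing (h : ∀ᵐ ω ∂PF, Some1 (bond ω)) : ∃ n, 1 / 2 < PF.real {ω | Hev e1 n ω} := by
  obtain ⟨k, hk⟩ := ball_prob h (1 / 10000) (by norm_num)
  have hsum : Filter.Tendsto (fun n => ∑ z ∈ box k 0 ×ˢ box k 0, PF.real {ω | Uev z.1 z.2 n ω})
      Filter.atTop (nhds 0) := by
    have := tendsto_finsetSum (box k 0 ×ˢ box k 0) fun z _ => Uev_tendsto z.1 z.2
    simpa using this
  obtain ⟨n, hn, hkn⟩ := ((hsum.eventually (gt_mem_nhds (show (0 : ℝ) < 1 / 10 by norm_num))).and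
    (Filter.eventually_ge_atTop k)).exists
  refine ⟨n, ?_⟩
  set q := PF.real {ω | Ev e1 k n ω} with hq
  have q1 : PF.real {ω | Ev (rot e1) k n ω} = q := Ev_eq _ _ _
  have q2 : PF.real {ω | Ev (rot (rot e1)) k n ω} = q := by rw [Ev_eq, q1]
  have q3 : PF.real {ω | Ev (rot (rot (rot e1))) k n ω} = q := by rw [Ev_eq, q2]
  have a1 := harris_or (Ev_local e1 k n) (Ev_local (rot e1) k n) (Ev_incr _ _ _) (Ev_incr _ _ _)
  have a2 := harris_or (Ev_local (rot (rot e1)) k n) (Ev_local (rot (rot (rot e1))) k n)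
    (Ev_incr _ _ _) (Ev_incr _ _ _)
  have l1 := (Ev_local e1 k n).or (Ev_local (rot e1) k n)
  have l2 := (Ev_local (rot (rot e1)) k n).or (Ev_local (rot (rot (rot e1))) k n)
  have a3 := harris_or l1 l2 ((Ev_incr _ _ _).or (Ev_incr _ _ _)) ((Ev_incr _ _ _).or (Ev_incr _ _ _))
  rw [← hq, q1] at a1
  rw [q2, q3] at a2
  have a4 : 1 - PF.real {ω | (Ev e1 k n ω ∨ Ev (rot e1) k n ω) ∨
      (Ev (rot (rot e1)) k n ω ∨ Ev (rot (rot (rot e1))) k n ω)} < 1 / 10000 := by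
    refine lt_of_le_of_lt ?_ hk
    rw [← probReal_compl_eq_one_sub (l1.or l2).meas]
    refine measureReal_mono fun ω hω => ?_
    rintro ⟨x, hx, hi⟩
    exact hω (exit_Ev hkn hx hi)
  have hq1 : q ≤ 1 := measureReal_le_one
  have hq9 : 9 / 10 ≤ q := by
    by_contra hcon
    push Not at hcon
    have b0 : (1 / 100 : ℝ) ≤ (1 - q) * (1 - q) := by nlinarith
    have b1 := b0.trans a1
    have b2 := b0.trans a2
    nlinarith [mul_le_mul b1 b2 (by norm_num) (by linarith)]
  have hcompl : 1 - PF.real {ω | Hev e1 n ω} ≤ 3 / 10 := by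
    rw [← probReal_compl_eq_one_sub (Hev_local _ _).meas]
    have hsub : {ω | Hev e1 n ω}ᶜ ⊆ ({ω | Ev e1 k n ω}ᶜ ∪ {ω | Ev (rot (rot e1)) k n ω}ᶜ) ∪
        ⋃ z ∈ box k 0 ×ˢ box k 0, {ω | Uev z.1 z.2 n ω} := by
      intro ω hω
      by_contra hcon
      simp only [Set.mem_union, Set.mem_compl_iff, Set.mem_ofPred_eq, Set.mem_iUnion, not_or,
        not_not, not_exists] at hcon
      refine hω (Hev_of hkn hcon.1.1 ?_ fun x hx y hy => hcon.2 (x, y) (Finset.mem_product.2 ⟨hx, hy⟩))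
      have := hcon.1.2
      rwa [rot_e1, rot_e2] at this
    have c1 : PF.real {ω | Ev e1 k n ω}ᶜ = 1 - q := probReal_compl_eq_one_sub (Ev_local _ _ _).meas
    have c2 : PF.real {ω | Ev (rot (rot e1)) k n ω}ᶜ = 1 - q := by
      rw [probReal_compl_eq_one_sub (Ev_local _ _ _).meas, q2]
    have c3 := measureReal_biUnion_finset_le (μ := PF) (box k 0 ×ˢ box k 0)
      (fun z : V × V => {ω | Uev z.1 z.2 n ω})
    calc _ ≤ _ := measureReal_mono hsub
      _ ≤ _ := measureReal_union_le _ _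
      _ ≤ (PF.real {ω | Ev e1 k n ω}ᶜ + PF.real {ω | Ev (rot (rot e1)) k n ω}ᶜ) +
          ∑ z ∈ box k 0 ×ˢ box k 0, PF.real {ω | Uev z.1 z.2 n ω} :=
        add_le_add (measureReal_union_le _ _) c3
      _ ≤ 3 / 10 := by rw [c1, c2]; linarith
  linarith

end DaC

namespace DaC
open Relation MeasureTheory ProbabilityTheory

/-! ### Part 8: duality and Harris theorem -/

def sre (i : V × Fin 3) : V × Fin 3 :=
  if i.2 = 0 then (i.1 + e1, 1) else if i.2 = 1 then (i.1 + e2, 0) else i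

def star (ω : Om) : Om := fun i => !(ω (sre i))

lemma sre_inj : Function.Injective sre := by
  rintro ⟨a, i⟩ ⟨b, j⟩ h
  fin_cases i <;> fin_cases j <;> simp [sre] at h ⊢ <;> exact h

lemma mp_star : MeasurePreserving star PF PF := by
  have h1 : MeasurePreserving (fun (ω : Om) i => ω (sre i)) PF PF := mp_reindex sre_inj fun _ => rfl
  have h2 : MeasurePreserving (fun (ω : Om) i => !(ω i)) PF PF := by
    refine ⟨by fun_prop, ?_⟩
    have := Measure.infinitePi_map_pi (μ := fun _ : V × Fin 3 => fair)
      (f := fun _ b => !b) (fun _ => by fun_prop)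
    have h3 : fair.map (fun b => !b) = fair := by
      refine Measure.ext_of_singleton fun b => ?_
      rw [Measure.map_apply (by fun_prop) (by trivial)]
      have : (fun b => !b) ⁻¹' {b} = ({!b} : Set Bool) := by ext x; cases x <;> cases b <;> simp
      rw [this, fair_singleton, fair_singleton]
    rw [h3] at this
    exact this
  exact h2.comp h1

/-- Crossing counter for one dual step. -/
def gst (b c v : V) : ℤ :=
  if b.1 = c.1 ∧ b.1 < v.1 ∧ ((b.2 = v.2 - 1 ∧ c.2 = v.2) ∨ (c.2 = v.2 - 1 ∧ b.2 = v.2)) then 1 else 0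

def indA (v w : V) : ℤ := if w.1 < v.1 ∧ w.2 = v.2 then 1 else 0
def indR (v w : V) : ℤ := if v.2 ≤ w.2 then 1 else 0

def Dl (ω : Om) (n : ℕ) (a b : V) : Prop :=
  bond (star ω) a b ∧ -(n : ℤ) ≤ a.1 ∧ a.1 ≤ n ∧ -(n : ℤ) ≤ b.1 ∧ b.1 ≤ n

lemma winding {ω : Om} {n : ℕ} {a b : V} (h : ReflTransGen (Dl ω n) a b) :
    ∃ F : V → ℤ, (∀ v, ω (v, 0) = true → (F (v + e1) + F v) % 2 = 0) ∧
      (∀ v, ω (v, 1) = true → (F v + F (v + e2) + indA v b + indA v a) % 2 = 0) ∧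
      (∀ v : V, v.1 ≤ -n → F v % 2 = 0) ∧
      (∀ v : V, n + 1 ≤ v.1 → (F v + indR v b + indR v a) % 2 = 0) := by
  induction h with
  | refl => exact ⟨fun _ => 0, by simp, fun v _ => by change ((0:ℤ) + 0 + _ + _) % 2 = 0; omega, by simp,
      fun v _ => by change ((0:ℤ) + _ + _) % 2 = 0; omega⟩
  | @tail b c _ hbc ih =>
    obtain ⟨F, f1, f2, f3, f4⟩ := ih
    obtain ⟨hb, c1, c2, c3, c4⟩ := hbc
    have key : (∀ v, ω (v, 0) = true → (gst b c (v + e1) + gst b c v) % 2 = 0) ∧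
      (∀ v, ω (v, 1) = true →
        (gst b c v + gst b c (v + e2) + indA v b + indA v c) % 2 = 0) ∧
      (∀ v : V, v.1 ≤ -n → gst b c v % 2 = 0) ∧
      (∀ v : V, n + 1 ≤ v.1 → (gst b c v + indR v b + indR v c) % 2 = 0) := by
      obtain ⟨b1, b2⟩ := b
      obtain ⟨d1, d2⟩ := c
      have hb' : (d1 = b1 + 1 ∧ d2 = b2 ∧ ω ((b1 + 1, b2), 1) = false) ∨
          (d1 = b1 ∧ d2 = b2 + 1 ∧ ω ((b1, b2 + 1), 0) = false) ∨
          (b1 = d1 + 1 ∧ b2 = d2 ∧ ω ((d1 + 1, d2), 1) = false) ∨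
          (b1 = d1 ∧ b2 = d2 + 1 ∧ ω ((d1, d2 + 1), 0) = false) := by
        simpa [bond, star, sre, e1, e2, Prod.ext_iff, and_assoc] using hb
      simp only at c1 c2 c3 c4
      refine ⟨?_, ?_, ?_, ?_⟩
      · rintro ⟨v1, v2⟩ hv
        have hv' : ∀ x y, ω ((x, y), 0) = false → ¬ (x = v1 ∧ y = v2) := by
          rintro x y hxy ⟨rfl, rfl⟩; rw [hv] at hxy; cases hxy
        rcases hb' with ⟨h1, h2, h3⟩ | ⟨h1, h2, h3⟩ | ⟨h1, h2, h3⟩ | ⟨h1, h2, h3⟩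
        · simp only [gst, e1, Prod.mk_add_mk]; split_ifs <;> omega
        · have := hv' _ _ h3; simp only [gst, e1, Prod.mk_add_mk]; split_ifs <;> omega
        · simp only [gst, e1, Prod.mk_add_mk]; split_ifs <;> omega
        · have := hv' _ _ h3; simp only [gst, e1, Prod.mk_add_mk]; split_ifs <;> omega
      · rintro ⟨v1, v2⟩ hv
        have hv' : ∀ x y, ω ((x, y), 1) = false → ¬ (x = v1 ∧ y = v2) := by
          rintro x y hxy ⟨rfl, rfl⟩; rw [hv] at hxy; cases hxy
        rcases hb' with ⟨h1, h2, h3⟩ | ⟨h1, h2, h3⟩ | ⟨h1, h2, h3⟩ | ⟨h1, h2, h3⟩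
        · have := hv' _ _ h3; simp only [gst, indA, e2, Prod.mk_add_mk]; split_ifs <;> omega
        · simp only [gst, indA, e2, Prod.mk_add_mk]; split_ifs <;> omega
        · have := hv' _ _ h3; simp only [gst, indA, e2, Prod.mk_add_mk]; split_ifs <;> omega
        · simp only [gst, indA, e2, Prod.mk_add_mk]; split_ifs <;> omega
      · rintro ⟨v1, v2⟩ hv
        simp only [gst] at *; split_ifs <;> omega
      · rintro ⟨v1, v2⟩ hv
        simp only [gst, indR] at *
        rcases hb' with ⟨h1, h2, h3⟩ | ⟨h1, h2, h3⟩ | ⟨h1, h2, h3⟩ | ⟨h1, h2, h3⟩ <;>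
        split_ifs <;> omega
    obtain ⟨g1, g2, g3, g4⟩ := key
    refine ⟨fun v => F v + gst b c v, fun v hv => ?_, fun v hv => ?_, fun v hv => ?_, fun v hv => ?_⟩
    · have := f1 v hv; have := g1 v hv; simp only; omega
    · have := f2 v hv; have := g2 v hv; simp only; omega
    · have := f3 v hv; have := g3 v hv; simp only; omega
    · have := f4 v hv; have := g4 v hv; simp only; omega

lemma not_both {ω : Om} {n : ℕ} (h1 : Hev e1 n ω) (h2 : Hev e2 n (star ω)) : False := by
  obtain ⟨v, w, hv, hw, hvw, v1, v2, w1, w2⟩ := h1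
  obtain ⟨a, b, ha, hb, hab, a1, a2, b1, b2⟩ := h2
  simp only [mem_box, e1, e2, Prod.fst_sub, Prod.snd_sub, Prod.fst_add, Prod.snd_add, Prod.fst_zero,
    Prod.snd_zero] at hv hw v2 w2 ha hb a2 b2
  have hD : ReflTransGen (Dl ω n) (a - e2) (b + e2) := by
    refine .head ⟨bond_symm _ _ _ a1, ?_, ?_, ?_, ?_⟩ (.tail (rtg_mono ?_ hab) ⟨b1, ?_, ?_, ?_, ?_⟩)
    case refine_5 =>
      rintro x y ⟨hxy, hx, hy⟩
      simp only [mem_box, Prod.fst_zero, Prod.snd_zero] at hx hy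
      exact ⟨hxy, by omega, by omega, by omega, by omega⟩
    all_goals (try simp [e2]); omega
  obtain ⟨F, f1, f2, f3, f4⟩ := winding hD
  have hstep : ∀ x y, On (bond ω) (box n 0) x y → (F x + F y) % 2 = 0 := by
    rintro x y ⟨hxy, hx, hy⟩
    simp only [mem_box, Prod.fst_zero, Prod.snd_zero] at hx hy
    rcases hxy with ⟨rfl, h⟩ | ⟨rfl, h⟩ | ⟨rfl, h⟩ | ⟨rfl, h⟩
    · have := f1 _ h; omega
    · have := f2 _ h
      simp only [indA, e2, Prod.fst_sub, Prod.snd_sub, Prod.fst_add, Prod.snd_add] at *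
      split_ifs at this <;> omega
    · have := f1 _ h; omega
    · have := f2 _ h
      simp only [indA, e2, Prod.fst_sub, Prod.snd_sub, Prod.fst_add, Prod.snd_add] at *
      split_ifs at this <;> omega
  have hpath : (F v + F w) % 2 = 0 := by
    clear w1 w2 hw
    induction hvw with
    | refl => omega
    | tail _ h ih => have := hstep _ _ h; omega
  have q1 := f3 v (by omega)
  have q2 := f4 (w + e1) (by simp [e1]; omega)
  have q3 : (F w + F (w + e1)) % 2 = 0 := by
    rcases w1 with ⟨_, h⟩ | ⟨h', h⟩ | ⟨h', h⟩ | ⟨h', h⟩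
    · have := f1 _ h; omega
    · simp [e1, e2] at h'
    · simp [e1, Prod.ext_iff] at h'; omega
    · simp [e1, e2, Prod.ext_iff] at h'
  simp only [indR, e1, e2, Prod.fst_sub, Prod.snd_sub, Prod.fst_add, Prod.snd_add] at q2
  split_ifs at q2 <;> simp only [e1] at * <;> omega

theorem harris_thm : ∀ᵐ ω ∂PF, ¬ Some1 (bond ω) := by
  rcases bond_BK.some01 with h | h
  · exact h
  exfalso
  obtain ⟨n, hn⟩ := crossing h
  have h2 := Hev_le e1 n
  rw [rot_e1] at h2
  have m2 : MeasurableSet {ω | Hev e2 n ω} := (Hev_local e2 n).meas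
  have m1 : MeasurableSet {ω | Hev e1 n ω} := (Hev_local e1 n).meas
  have h3 : PF.real (star ⁻¹' {ω | Hev e2 n ω}) = PF.real {ω | Hev e2 n ω} :=
    mp_star.measureReal_preimage m2.nullMeasurableSet
  have h4 : Disjoint {ω | Hev e1 n ω} (star ⁻¹' {ω | Hev e2 n ω}) :=
    Set.disjoint_left.2 fun ω a b => not_both a b
  have h5 := measureReal_union (μ := PF) h4 (mp_star.measurable m2)
  have h6 : PF.real ({ω | Hev e1 n ω} ∪ star ⁻¹' {ω | Hev e2 n ω}) ≤ 1 := measureReal_le_one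
  linarith

end DaC

namespace DaC
open Relation MeasureTheory ProbabilityTheory

/-! ### Part 9: binary digits -/

lemma boolOf_iff {P : Prop} : boolOf P = true ↔ P := by simp [boolOf]

lemma bit_iff {n : ℕ} {x : ℝ} : bit n x = true ↔ ⌊x * 2 ^ (n + 1)⌋ % 2 = 1 := boolOf_iff

lemma bit_succ (n : ℕ) (x : ℝ) : bit (n + 1) x = bit n (2 * x) := by
  unfold bit
  congr 4
  ring

lemma bit_sub_one (n : ℕ) (x : ℝ) : bit n (x - 1) = bit n x := by
  rw [Bool.eq_iff_iff, bit_iff, bit_iff]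
  have : (x - 1) * 2 ^ (n + 1) = x * 2 ^ (n + 1) - ((2 ^ (n + 1) : ℤ) : ℝ) := by push_cast; ring
  rw [this, Int.floor_sub_intCast, pow_succ]
  omega

lemma bit_zero_iff {x : ℝ} (h0 : 0 ≤ x) (h1 : x < 1) : bit 0 x = true ↔ 1 / 2 ≤ x := by
  rw [bit_iff]
  have a : 0 ≤ ⌊x * 2 ^ (0 + 1)⌋ := Int.floor_nonneg.2 (by positivity)
  have b : ⌊x * 2 ^ (0 + 1)⌋ < 2 := Int.floor_lt.2 (by push_cast; linarith)
  have c : 1 ≤ ⌊x * 2 ^ (0 + 1)⌋ ↔ 1 / 2 ≤ x := by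
    rw [Int.le_floor]; push_cast; constructor <;> intro <;> linarith
  rw [← c]; omega

lemma measurable_bit (n : ℕ) : Measurable (bit n) := by
  refine measurable_to_bool ?_
  have : bit n ⁻¹' {true} = (fun x : ℝ => ⌊x * 2 ^ (n + 1)⌋) ⁻¹' {z | z % 2 = 1} := by
    ext x; simp [bit_iff]
  rw [this]
  exact (Int.measurable_floor.comp (by fun_prop)) (by trivial)

lemma fair_apply (s : Set Bool) [Decidable (true ∈ s)] [Decidable (false ∈ s)] :
    fair s = (if false ∈ s then 2⁻¹ else 0) + (if true ∈ s then 2⁻¹ else 0) := by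
  simp only [fair, Measure.add_apply, Measure.smul_apply, smul_eq_mul,
    Measure.dirac_apply' _ (show MeasurableSet s by trivial), Set.indicator]
  split_ifs <;> simp

def Bset (n : ℕ) (t : ℕ → Set Bool) : Set ℝ := {x | (0 ≤ x ∧ x < 1) ∧ ∀ i < n, bit i x ∈ t i}

lemma Bset_meas (n : ℕ) (t : ℕ → Set Bool) : MeasurableSet (Bset n t) := by
  have : Bset n t = Set.Ico 0 1 ∩ ⋂ i : ℕ, ⋂ _ : i < n, bit i ⁻¹' (t i) := by
    ext x; simp [Bset]
  rw [this]
  exact measurableSet_Ico.inter (.iInter fun i => .iInter fun _ => measurable_bit i trivial)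

open Classical in
lemma Bset_succ (n : ℕ) (t : ℕ → Set Bool) : Bset (n + 1) t =
    (if false ∈ t 0 then (fun x => (2:ℝ) * x) ⁻¹' (Bset n fun i => t (i + 1)) else ∅) ∪
    (if true ∈ t 0 then (fun x => (2:ℝ) * x) ⁻¹' ((fun x => x - 1) ⁻¹' (Bset n fun i => t (i + 1)))
      else ∅) := by
  ext x
  have h1 : x ∈ (if false ∈ t 0 then (fun x => (2:ℝ) * x) ⁻¹' (Bset n fun i => t (i + 1)) else ∅) ↔
      false ∈ t 0 ∧ (0 ≤ 2 * x ∧ 2 * x < 1) ∧ ∀ i < n, bit (i + 1) x ∈ t (i + 1) := by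
    split_ifs with h <;> simp [h, Bset, bit_succ]
  have h2 : x ∈ (if true ∈ t 0 then (fun x => (2:ℝ) * x) ⁻¹' ((fun x => x - 1) ⁻¹'
      (Bset n fun i => t (i + 1))) else ∅) ↔
      true ∈ t 0 ∧ (0 ≤ 2 * x - 1 ∧ 2 * x - 1 < 1) ∧ ∀ i < n, bit (i + 1) x ∈ t (i + 1) := by
    split_ifs with h <;> simp [h, Bset, bit_succ, bit_sub_one]
  rw [Set.mem_union, h1, h2]
  have h3 : (∀ i < n + 1, bit i x ∈ t i) ↔ bit 0 x ∈ t 0 ∧ ∀ i < n, bit (i + 1) x ∈ t (i + 1) := by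
    constructor
    · exact fun h => ⟨h 0 (by omega), fun i hi => h _ (by omega)⟩
    · rintro ⟨h, h'⟩ (_ | i) hi
      · exact h
      · exact h' i (by omega)
  unfold Bset
  rw [Set.mem_ofPred_eq, h3]
  constructor
  · rintro ⟨⟨a, b⟩, c, d⟩
    have := bit_zero_iff a b
    by_cases h : 1 / 2 ≤ x
    · rw [this.2 h] at c
      exact Or.inr ⟨c, ⟨by linarith, by linarith⟩, d⟩
    · rw [show bit 0 x = false by rw [← Bool.not_eq_true, this]; exact h] at c
      exact Or.inl ⟨c, ⟨by linarith, by linarith⟩, d⟩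
  · rintro (⟨a, ⟨b, c⟩, d⟩ | ⟨a, ⟨b, c⟩, d⟩)
    · have := bit_zero_iff (x := x) (by linarith) (by linarith)
      refine ⟨⟨by linarith, by linarith⟩, ?_, d⟩
      rw [show bit 0 x = false by rw [← Bool.not_eq_true, this]; linarith]; exact a
    · have := bit_zero_iff (x := x) (by linarith) (by linarith)
      refine ⟨⟨by linarith, by linarith⟩, ?_, d⟩
      rw [this.2 (by linarith)]; exact a

open Classical in
lemma vol_Bset (n : ℕ) (t : ℕ → Set Bool) : volume (Bset n t) = ∏ i ∈ Finset.range n, fair (t i) := by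
  induction n generalizing t with
  | zero => 
    have : Bset 0 t = Set.Ico 0 1 := by ext x; simp [Bset]
    simp [this]
  | succ n ih =>
    rw [Bset_succ, measure_union, Finset.prod_range_succ', ← ih fun i => t (i + 1), fair_apply,
      mul_add, ]
    · have h2 : ENNReal.ofReal |(2:ℝ)⁻¹| = 2⁻¹ := by
        rw [abs_of_pos (by norm_num), ENNReal.ofReal_inv_of_pos (by norm_num)]; simp
      have h3 : volume ((fun x => x - 1) ⁻¹' (Bset n fun i => t (i + 1))) =
          volume (Bset n fun i => t (i + 1)) :=
        (measurePreserving_sub_right volume (1 : ℝ)).measure_preimage (Bset_meas _ _).nullMeasurableSet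
      congr 1
      · split_ifs
        · rw [Real.volume_preimage_mul_left (by norm_num), h2, mul_comm]
        · simp
      · split_ifs
        · rw [Real.volume_preimage_mul_left (by norm_num), h2, h3, mul_comm]
        · simp
    · rw [Set.disjoint_left]
      intro x h h'
      split_ifs at h h'
      · have a := h.1.2
        have b := h'.1.1
        simp only at a b
        linarith
      all_goals simp at h h'
    · split_ifs
      · exact ((Bset_meas _ _).preimage (by fun_prop)).preimage (by fun_prop)
      · simp

instance : IsProbabilityMeasure base := ⟨by simp [base]⟩

lemma law_bits : base.map (fun x n => bit n x) = Measure.infinitePi fun _ : ℕ => fair := by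
  classical
  have hm : Measurable fun (x : ℝ) n => bit n x := measurable_pi_lambda _ measurable_bit
  refine Measure.eq_infinitePi _ fun s t ht => ?_
  rw [Measure.map_apply hm (.pi s.countable_toSet fun i _ => ht i)]
  obtain ⟨N, hN⟩ := s.exists_nat_subset_range
  have h1 : (fun (x : ℝ) n => bit n x) ⁻¹' (s : Set ℕ).pi t =
      {x | ∀ i < N, bit i x ∈ (if i ∈ s then t i else Set.univ)} := by
    ext x
    simp only [Set.mem_preimage, Set.mem_pi, Set.mem_ofPred_eq, Finset.mem_coe]
    constructor
    · intro h i _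
      split_ifs with hi
      · exact h i hi
      · trivial
    · intro h i hi
      have := h i (Finset.mem_range.1 (hN hi))
      rwa [if_pos hi] at this
  rw [h1, base, ← restrict_Ico_eq_restrict_Ioc, Measure.restrict_apply' measurableSet_Ico]
  have h2 : {x | ∀ i < N, bit i x ∈ (if i ∈ s then t i else Set.univ)} ∩ Set.Ico 0 1 =
      Bset N fun i => if i ∈ s then t i else Set.univ := by
    ext x; simp [Bset, and_comm]
  rw [h2, vol_Bset, ← Finset.prod_subset hN]
  · exact Finset.prod_congr rfl fun i hi => by rw [if_pos hi]
  · intro i _ hi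
    rw [if_neg hi, measure_univ]

/-! indexing -/

noncomputable def idx (j : V × Fin 3) : ℕ :=
  if j.2 = 0 then 2 * eIdx j.1 (j.1 + e1) else if j.2 = 1 then 2 * eIdx j.1 (j.1 + e2)
  else 2 * Encodable.encode j.1 + 1

lemma eIdx_comm (a b : V) : eIdx a b = eIdx b a := min_comm _ _

lemma eIdx_inj {a b c d : V} (h : eIdx a b = eIdx c d) : (a = c ∧ b = d) ∨ (a = d ∧ b = c) := by
  unfold eIdx at h
  have key : ∀ x y : V × V, Encodable.encode x = Encodable.encode y → x = y :=
    fun x y h => Encodable.encode_injective h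
  rcases min_choice (Encodable.encode (a, b)) (Encodable.encode (b, a)) with h1 | h1 <;>
  rcases min_choice (Encodable.encode (c, d)) (Encodable.encode (d, c)) with h2 | h2 <;>
  · rw [h1, h2] at h
    have := key _ _ h
    simp only [Prod.mk.injEq] at this
    tauto

lemma idx_inj : Function.Injective idx := by
  rintro ⟨⟨a1, a2⟩, i⟩ ⟨⟨b1, b2⟩, j⟩ h
  fin_cases i <;> fin_cases j <;> simp [idx] at h
  any_goals omega
  any_goals
    have := eIdx_inj h
    simp only [e1, e2, Prod.mk_add_mk, Prod.mk.injEq] at this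
    simp; omega
  rw [h.1, h.2]

noncomputable def rows (x : ℝ) (j : V × Fin 3) (k : ℕ) : Bool := bit (Nat.pair (idx j) k) x


lemma measurable_rows : Measurable rows :=
  measurable_pi_lambda _ fun _ => measurable_pi_lambda _ fun _ => measurable_bit _

noncomputable def BB : Measure (ℕ → Bool) := Measure.infinitePi fun _ : ℕ => fair

instance : IsProbabilityMeasure BB := by unfold BB; infer_instance

lemma law_rows : base.map rows = Measure.infinitePi fun _ : V × Fin 3 => BB := by
  have hm : Measurable fun (x : ℝ) n => bit n x := measurable_pi_lambda _ measurable_bit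
  let e : (V × Fin 3) × ℕ → ℕ := fun q => Nat.pair (idx q.1) q.2
  have he : Function.Injective e := by
    rintro ⟨a, i⟩ ⟨b, j⟩ h
    have h' := Nat.pair_eq_pair.1 h
    exact Prod.ext (idx_inj h'.1) h'.2
  have h1 := Measure.map_infinitePi_infinitePi_of_inj (P := fun _ : ℕ => fair) he
  have h2 := Measure.infinitePi_map_curry (fun (_ : V × Fin 3) (_ : ℕ) => fair)
  rw [← h1, ← law_bits, Measure.map_map (by fun_prop) hm, Measure.map_map (by fun_prop)
    (by exact measurable_pi_lambda _ fun q => measurable_bit _)] at h2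
  rw [law_bits] at h2
  exact h2

noncomputable def Uf (b : ℕ → Bool) : ℝ := ∑' k : ℕ, if b k then ((2 : ℝ)⁻¹) ^ (k + 1) else 0

lemma unif_idx (j : V × Fin 3) (x : ℝ) : unif (idx j) x = Uf (rows x j) := rfl

lemma Uf_summable (b : ℕ → Bool) : Summable fun k : ℕ => if b k then ((2 : ℝ)⁻¹) ^ (k + 1) else 0 := by
  have h : Summable fun k : ℕ => ((2 : ℝ)⁻¹) ^ (k + 1) :=
    (summable_nat_add_iff 1).2 (summable_geometric_of_lt_one (by norm_num) (by norm_num))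
  refine Summable.of_nonneg_of_le (fun k => ?_) (fun k => ?_) h
  · split_ifs <;> positivity
  · split_ifs
    · exact le_rfl
    · positivity

lemma measurable_Uf : Measurable Uf := by
  refine measurable_of_tendsto_metrizable (f := fun n (b : ℕ → Bool) =>
    ∑ k ∈ Finset.range n, if b k then ((2 : ℝ)⁻¹) ^ (k + 1) else 0) (fun n => ?_) ?_
  · refine Finset.measurable_fun_sum _ fun k _ => ?_
    exact (measurable_of_countable fun c : Bool => if c then ((2 : ℝ)⁻¹) ^ (k + 1) else 0).comp
      (measurable_pi_apply k)
  · rw [tendsto_pi_nhds]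
    exact fun b => (Uf_summable b).hasSum.tendsto_sum_nat

lemma Uf_half {b : ℕ → Bool} (h : b 0 = true) : 1 / 2 ≤ Uf b := by
  have := (Uf_summable b).le_tsum 0 fun k _ => by split_ifs <;> positivity
  simpa [h, Uf] using this

noncomputable def thr (p r : ℝ) (k : Fin 3) (b : ℕ → Bool) : Bool :=
  boolOf (Uf b < if k = 2 then r else p)

lemma measurable_thr (p r : ℝ) (k : Fin 3) : Measurable (thr p r k) := by
  refine measurable_to_bool ?_
  have : thr p r k ⁻¹' {true} = Uf ⁻¹' (Set.Iio (if k = 2 then r else p)) := by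
    ext x; simp [thr, boolOf_iff]
  rw [this]
  exact measurable_Uf measurableSet_Iio

noncomputable def nu (p r : ℝ) (k : Fin 3) : Measure Bool := BB.map (thr p r k)

instance (p r : ℝ) (k : Fin 3) : IsProbabilityMeasure (nu p r k) :=
  Measure.isProbabilityMeasure_map (measurable_thr p r k).aemeasurable

noncomputable def XX (p r x : ℝ) : Om := fun j => thr p r j.2 (rows x j)
noncomputable def YY (x : ℝ) : Om := fun j => !(rows x j 0)

lemma measurable_XX (p r : ℝ) : Measurable (XX p r) :=
  measurable_pi_lambda _ fun j => (measurable_thr p r j.2).comp ((measurable_pi_apply j).comp measurable_rows)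

lemma law_XX (p r : ℝ) : base.map (XX p r) = PP (nu p r) := by
  have h := Measure.infinitePi_map_pi (fun _ : V × Fin 3 => BB) (f := fun j => thr p r j.2)
    fun j => measurable_thr p r j.2
  have hm : Measurable fun (x : V × Fin 3 → ℕ → Bool) i => thr p r i.2 (x i) :=
    measurable_pi_lambda _ fun j => (measurable_thr p r j.2).comp (measurable_pi_apply j)
  rw [← law_rows, Measure.map_map hm measurable_rows] at h
  exact h

lemma fair_not : fair.map (fun b => !b) = fair := by
  refine Measure.ext_of_singleton fun b => ?_
  rw [Measure.map_apply (by fun_prop) (by trivial)]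
  have : (fun b => !b) ⁻¹' {b} = ({!b} : Set Bool) := by ext x; cases x <;> cases b <;> simp
  rw [this, fair_singleton, fair_singleton]

lemma measurable_YY : Measurable YY := by
  refine measurable_pi_lambda _ fun j => ?_
  exact (measurable_of_countable fun c : Bool => !c).comp (measurable_bit _)

lemma law_YY : base.map YY = PF := by
  have hm : Measurable fun b : ℕ → Bool => !(b 0) := by fun_prop
  have h := Measure.infinitePi_map_pi (fun _ : V × Fin 3 => BB) (f := fun _ b => !(b 0))
    fun j => hm
  have h0 : BB.map (fun b => !(b 0)) = fair := by
    have : BB.map (fun b => b 0) = fair :=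
      (measurePreserving_eval_infinitePi (fun _ : ℕ => fair) 0).map_eq
    rw [← fair_not, ← this, Measure.map_map (by fun_prop) (by fun_prop)]
    rfl
  have hm' : Measurable fun (x : V × Fin 3 → ℕ → Bool) i => !(x i 0) :=
    measurable_pi_lambda _ fun j => hm.comp (measurable_pi_apply j)
  rw [← law_rows, Measure.map_map hm' measurable_rows, h0] at h
  exact h

lemma XX_le_YY {p r x : ℝ} (hp : p < 1 / 2) {j : V × Fin 3} (hj : j.2 ≠ 2) (h : XX p r x j = true) :
    YY x j = true := by
  have h1 := boolOf_iff.1 h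
  rw [if_neg hj] at h1
  unfold YY
  by_contra h2
  simp only [Bool.not_eq_true, Bool.not_eq_false'] at h2
  have := Uf_half h2
  linarith

lemma bond_mono2 {ω ω' : Om} (h : ∀ i, i.2 ≠ 2 → ω i = true → ω' i = true) (a b : V) (hb : bond ω a b) :
    bond ω' a b := by
  unfold bond at *
  rcases hb with ⟨x, y⟩ | ⟨x, y⟩ | ⟨x, y⟩ | ⟨x, y⟩
  · exact Or.inl ⟨x, h _ (by simp) y⟩
  · exact Or.inr (Or.inl ⟨x, h _ (by simp) y⟩)
  · exact Or.inr (Or.inr (Or.inl ⟨x, h _ (by simp) y⟩))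
  · exact Or.inr (Or.inr (Or.inr ⟨x, h _ (by simp) y⟩))

theorem finite_clusters {p : ℝ} (hp : p < 1 / 2) (r : ℝ) :
    ∀ᵐ ω ∂(PP (nu p r)), ¬ Some1 (bond ω) := by
  rw [← law_XX, ae_map_iff (measurable_XX p r).aemeasurable
    (measurableSet_setOfPred.2 (bond_meas.some1).not)]
  have h := harris_thm
  rw [← law_YY, ae_map_iff measurable_YY.aemeasurable
    (measurableSet_setOfPred.2 (bond_meas.some1).not)] at h
  filter_upwards [h] with x hx hs
  obtain ⟨v, hv⟩ := hs
  exact hx ⟨v, hv.mono fun w hw => rtg_mono (bond_mono2 fun i hi => XX_le_YY hp hi) hw⟩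

lemma edge_bond (p r x : ℝ) (a b : V) : edgeCfg SqAdj p x a b = true ↔ bond (XX p r x) a b := by
  have k0 : ∀ a : V, XX p r x (a, 0) = true ↔ edgeU a (a + e1) x < p := fun a => boolOf_iff
  have k1 : ∀ a : V, XX p r x (a, 1) = true ↔ edgeU a (a + e2) x < p := fun a => boolOf_iff
  have ks : ∀ a b, edgeU a b x = edgeU b a x := fun a b => by unfold edgeU; rw [eIdx_comm]
  unfold edgeCfg
  rw [Bool.and_eq_true, boolOf_iff, boolOf_iff]
  constructor
  · rintro ⟨h1, h2⟩
    have hc : b = a + e1 ∨ b = a + e2 ∨ a = b + e1 ∨ a = b + e2 := by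
      have := sqadj_cases h1
      obtain ⟨a1, a2⟩ := a
      obtain ⟨b1, b2⟩ := b
      simp [e1, e2, Prod.ext_iff] at *
      omega
    rcases hc with rfl | rfl | rfl | rfl
    · exact Or.inl ⟨rfl, (k0 _).2 h2⟩
    · exact Or.inr (Or.inl ⟨rfl, (k1 _).2 h2⟩)
    · exact Or.inr (Or.inr (Or.inl ⟨rfl, (k0 _).2 (by rw [ks]; exact h2)⟩))
    · exact Or.inr (Or.inr (Or.inr ⟨rfl, (k1 _).2 (by rw [ks]; exact h2)⟩))
  · intro h
    refine ⟨(bond_nice _).2 _ _ h, ?_⟩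
    rcases h with ⟨rfl, h⟩ | ⟨rfl, h⟩ | ⟨rfl, h⟩ | ⟨rfl, h⟩
    · exact (k0 _).1 h
    · exact (k1 _).1 h
    · rw [ks]; exact (k0 _).1 h
    · rw [ks]; exact (k1 _).1 h

end DaC

namespace DaC
open Relation MeasureTheory ProbabilityTheory

/-! ### Part 10: changing the representative -/

section mixing
variable {ν : Fin 3 → Measure Bool} [∀ k, IsProbabilityMeasure (ν k)]

def mix (z : Om × Om) : Om := fun i => if i.2 = 2 then z.2 i else z.1 i

lemma measurable_mix : Measurable mix := by
  refine measurable_pi_lambda _ fun i => ?_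
  unfold mix
  split_ifs <;> fun_prop

lemma mp_mix : MeasurePreserving mix ((PP ν).prod (PP ν)) (PP ν) := by
  classical
  refine ⟨measurable_mix, ?_⟩
  conv_rhs => unfold PP
  refine Measure.eq_infinitePi _ fun s t ht => ?_
  rw [Measure.map_apply measurable_mix (.pi s.countable_toSet fun _ _ ↦ ht _)]
  have : mix ⁻¹' (Set.pi s t) = (Set.pi (s.filter fun i => ¬ i.2 = 2 : Finset _) t) ×ˢ
      (Set.pi (s.filter fun i => i.2 = 2 : Finset _) t) := by
    ext z
    simp only [Set.mem_preimage, Set.mem_pi, Finset.mem_coe, Set.mem_prod, Finset.mem_filter, mix]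
    constructor
    · intro h
      refine ⟨fun i hi => ?_, fun i hi => ?_⟩
      · have := h i hi.1; rwa [if_neg hi.2] at this
      · have := h i hi.1; rwa [if_pos hi.2] at this
    · rintro ⟨h1, h2⟩ i hi
      split_ifs with h
      · exact h2 i ⟨hi, h⟩
      · exact h1 i ⟨hi, h⟩
  rw [this, Measure.prod_prod]
  unfold PP
  rw [Measure.infinitePi_pi _ fun i _ => ht i, Measure.infinitePi_pi _ fun i _ => ht i, mul_comm,
    Finset.prod_filter_mul_prod_filter_not]

end mixing

def IsRep (le : V → V → Prop) (ω : Om) (v w : V) : Prop :=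
  ReflTransGen (bond ω) v w ∧ ∀ w', ReflTransGen (bond ω) v w' → le w w'

def blk (le : V → V → Prop) (ω : Om) (v : V) : Prop := ∃ w, IsRep le ω v w ∧ ω (w, 2) = true

lemma IsRep.meas (le : V → V → Prop) (v w : V) : Measurable fun ω => IsRep le ω v w :=
  (bond_meas.rtg _ _).and (.forall fun _ => (bond_meas.rtg _ _).imp measurable_const)

lemma blk_meas (le : V → V → Prop) (v : V) : Measurable fun ω => blk le ω v :=
  .exists fun _ => (IsRep.meas _ _ _).and (measurable_coord _)

/-- a good order for picking representatives -/
structure Good (le : V → V → Prop) : Prop where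
  anti : ∀ a b, le a b → le b a → a = b
  ex : ∀ s : Set V, s.Finite → s.Nonempty → ∃ a ∈ s, ∀ b ∈ s, le a b

lemma good_of {β : Type*} [LinearOrder β] (f : V → β) (hf : Function.Injective f) :
    Good fun a b => f a ≤ f b :=
  ⟨fun _ _ h h' => hf (le_antisymm h h'), fun s h h' => s.exists_min_image f h h'⟩

def le0 (a b : V) : Prop := Encodable.encode a ≤ Encodable.encode b
def le1 (a b : V) : Prop := toLex a ≤ toLex b

lemma good0 : Good le0 := good_of _ Encodable.encode_injective
lemma good1 : Good le1 := good_of _ toLex.injective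

lemma bond_rtg_symm {ω : Om} {a b : V} (h : ReflTransGen (bond ω) a b) : ReflTransGen (bond ω) b a :=
  rtg_symm (bond_symm ω) h

lemma IsRep.uniq {le : V → V → Prop} (hg : Good le) {ω : Om} {v v' w w' : V} (h : IsRep le ω v w)
    (h' : IsRep le ω v' w') (hv : ReflTransGen (bond ω) v v') : w = w' :=
  hg.anti _ _ (h.2 _ (hv.trans h'.1)) (h'.2 _ ((bond_rtg_symm hv).trans h.1))

lemma IsRep.congr {le : V → V → Prop} {ω : Om} {v v' w : V} (h : IsRep le ω v w)
    (hv : ReflTransGen (bond ω) v v') : IsRep le ω v' w :=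
  ⟨(bond_rtg_symm hv).trans h.1, fun _ h' => h.2 _ (hv.trans h')⟩

lemma IsRep.exists {le : V → V → Prop} (hg : Good le) {ω : Om} (hω : ¬ Some1 (bond ω)) (v : V) :
    ∃ w, IsRep le ω v w := by
  have hf : (Clus (bond ω) v).Finite := by
    by_contra h; exact hω ⟨v, h⟩
  exact hg.ex _ hf ⟨v, .refl⟩

lemma bond_congr {ω ω' : Om} (h : ∀ i, i.2 ≠ 2 → ω i = ω' i) : bond ω = bond ω' := by
  ext a b
  exact ⟨bond_mono2 (fun i hi => by rw [h i hi]; exact id) a b,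
    bond_mono2 (fun i hi => by rw [h i hi]; exact id) a b⟩

/-- swap of the two representatives -/
def Sg (ω : Om) (v w : V) : Prop :=
  (IsRep le0 ω v v ∧ IsRep le1 ω v w) ∨ (¬ IsRep le0 ω v v ∧ IsRep le1 ω v v ∧ IsRep le0 ω v w) ∨
  (¬ IsRep le0 ω v v ∧ ¬ IsRep le1 ω v v ∧ v = w)

lemma Sg.meas (v w : V) : Measurable fun ω => Sg ω v w :=
  ((IsRep.meas _ _ _).and (IsRep.meas _ _ _)).or
   (((IsRep.meas _ _ _).not.and ((IsRep.meas _ _ _).and (IsRep.meas _ _ _))).or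
    ((IsRep.meas _ _ _).not.and ((IsRep.meas _ _ _).not.and measurable_const)))

lemma Sg.exists {ω : Om} (hω : ¬ Some1 (bond ω)) (v : V) : ∃ w, Sg ω v w := by
  by_cases h0 : IsRep le0 ω v v
  · obtain ⟨w, hw⟩ := IsRep.exists good1 hω v
    exact ⟨w, .inl ⟨h0, hw⟩⟩
  · by_cases h1 : IsRep le1 ω v v
    · obtain ⟨w, hw⟩ := IsRep.exists good0 hω v
      exact ⟨w, .inr (.inl ⟨h0, h1, hw⟩)⟩
    · exact ⟨v, .inr (.inr ⟨h0, h1, rfl⟩)⟩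

lemma Sg.uniq {ω : Om} {v w w' : V} (h : Sg ω v w) (h' : Sg ω v w') : w = w' := by
  rcases h with ⟨a, b⟩ | ⟨a, b, c⟩ | ⟨a, b, c⟩ <;> rcases h' with ⟨a', b'⟩ | ⟨a', b', c'⟩ | ⟨a', b', c'⟩
  · exact b.uniq good1 b' .refl
  · exact absurd a a'
  · exact absurd a a'
  · exact absurd a' a
  · exact c.uniq good0 c' .refl
  · exact absurd b b'
  · exact absurd a' a
  · exact absurd b' b
  · exact c.symm.trans c'

lemma Sg.symm {ω : Om} {v w : V} (h : Sg ω v w) : Sg ω w v := by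
  rcases h with ⟨a, b⟩ | ⟨a, b, c⟩ | ⟨a, b, c⟩
  · have a' := a.congr b.1
    have b' := b.congr b.1
    by_cases h : IsRep le0 ω w w
    · have : v = w := a'.uniq good0 h .refl
      subst this
      exact .inl ⟨a, b⟩
    · exact .inr (.inl ⟨h, b', a'⟩)
  · exact .inl ⟨c.congr c.1, b.congr c.1⟩
  · subst c; exact .inr (.inr ⟨a, b, rfl⟩)

lemma Sg.of_rep {ω : Om} {v w w' : V} (h : IsRep le0 ω v w) (h' : IsRep le1 ω v w') : Sg ω w w' :=
  .inl ⟨h.congr h.1, h'.congr h.1⟩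

noncomputable def swp (ω ω' : Om) : Om := fun i => boolOf (∃ w, Sg ω i.1 w ∧ ω' (w, i.2) = true)

lemma measurable_boolOf {Ω : Type*} [MeasurableSpace Ω] {P : Ω → Prop} (h : Measurable P) :
    Measurable fun ω => boolOf (P ω) := by
  refine measurable_to_bool ?_
  have : (fun ω => boolOf (P ω)) ⁻¹' {true} = {ω | P ω} := by ext x; simp [boolOf_iff]
  rw [this]
  exact measurableSet_setOfPred.2 h

lemma measurable_swp : Measurable (Function.uncurry swp) := by
  refine measurable_pi_lambda _ fun i => ?_
  refine measurable_boolOf (P := fun z : Om × Om => ∃ w, Sg z.1 i.1 w ∧ z.2 (w, i.2) = true) ?_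
  exact .exists fun w => ((Sg.meas _ _).comp measurable_fst).and
    ((measurable_coord _).comp measurable_snd)

section swapping
variable {ν : Fin 3 → Measure Bool} [∀ k, IsProbabilityMeasure (ν k)]

lemma mp_swp {ω : Om} (hω : ¬ Some1 (bond ω)) : (PP ν).map (swp ω) = PP ν := by
  choose σ hσ using Sg.exists hω
  have he : Function.Injective fun i : V × Fin 3 => (σ i.1, i.2) := by
    rintro ⟨a, i⟩ ⟨b, j⟩ h
    simp only [Prod.mk.injEq] at h
    have h1 := (hσ a).symm
    rw [h.1] at h1
    exact Prod.ext (h1.uniq (hσ b).symm) h.2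
  have h := (mp_reindex (ν := ν) he fun _ => rfl).map_eq
  have h2 : swp ω = fun (ω' : Om) i => ω' (σ i.1, i.2) := by
    ext ω' i
    rw [Bool.eq_iff_iff, swp, boolOf_iff]
    constructor
    · rintro ⟨w, h1, h2⟩
      rwa [h1.uniq (hσ i.1)] at h2
    · exact fun h => ⟨_, hσ _, h⟩
  rw [h2]; exact h

noncomputable def blkC (le : V → V → Prop) (ω : Om) : ColourCfg := fun v => boolOf (blk le ω v)

lemma measurable_blkC (le : V → V → Prop) : Measurable (blkC le) :=
  measurable_pi_lambda _ fun v => measurable_boolOf (blk_meas le v)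

lemma law_blk (hfin : ∀ᵐ ω ∂PP ν, ¬ Some1 (bond ω)) :
    (PP ν).map (blkC le0) = (PP ν).map (blkC le1) := by
  have hs : MeasurePreserving (fun z : Om × Om => (z.1, swp z.1 z.2))
      ((PP ν).prod (PP ν)) ((PP ν).prod (PP ν)) :=
    (MeasurePreserving.id (PP ν)).skew_product measurable_swp
      (hfin.mono fun ω hω => mp_swp hω)
  have h0 : (PP ν).map (blkC le0) =
      ((PP ν).prod (PP ν)).map (fun z => blkC le0 (mix (z.1, swp z.1 z.2))) := by
    have h := ((mp_mix (ν := ν)).comp hs).map_eq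
    rw [← h, Measure.map_map (measurable_blkC _) ((mp_mix (ν := ν)).comp hs).measurable, h]
    rfl
  have h1 : (PP ν).map (blkC le1) = ((PP ν).prod (PP ν)).map (fun z => blkC le1 (mix z)) := by
    have h := (mp_mix (ν := ν)).map_eq
    rw [← h, Measure.map_map (measurable_blkC _) measurable_mix, h]
    rfl
  rw [h0, h1]
  refine Measure.map_congr ?_
  have hfin2 : ∀ᵐ z ∂(PP ν).prod (PP ν), ¬ Some1 (bond z.1) :=
    Measure.quasiMeasurePreserving_fst.ae hfin
  filter_upwards [hfin2] with z hz
  have hb1 : bond (mix z) = bond z.1 := bond_congr fun i hi => by simp [mix, hi]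
  have hb2 : bond (mix (z.1, swp z.1 z.2)) = bond z.1 := bond_congr fun i hi => by simp [mix, hi]
  have hr1 : ∀ le v w, IsRep le (mix z) v w ↔ IsRep le z.1 v w := fun le v w => by
    unfold IsRep; rw [hb1]
  have hr2 : ∀ le v w, IsRep le (mix (z.1, swp z.1 z.2)) v w ↔ IsRep le z.1 v w := fun le v w => by
    unfold IsRep; rw [hb2]
  funext v
  obtain ⟨w0, hw0⟩ := IsRep.exists good0 hz v
  obtain ⟨w1, hw1⟩ := IsRep.exists good1 hz v
  have hs := Sg.of_rep hw0 hw1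
  rw [blkC, blkC, Bool.eq_iff_iff, boolOf_iff, boolOf_iff]
  unfold blk
  simp_rw [hr1, hr2]
  simp only [mix, if_true, swp, boolOf_iff]
  constructor
  · rintro ⟨w, h1, w', h2, h3⟩
    rw [h1.uniq good0 hw0 .refl] at h2
    rw [h2.uniq hs] at h3
    exact ⟨w1, hw1, h3⟩
  · rintro ⟨w, h1, h2⟩
    rw [h1.uniq good1 hw1 .refl] at h2
    exact ⟨w0, hw0, w1, hs, h2⟩

end swapping

end DaC

namespace DaC
open Relation MeasureTheory ProbabilityTheory

/-! ### Part 11: the DaC model -/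

def Gc (ξ : ColourCfg) : Gr := fun a b => SqAdj a b ∧ ξ a = true ∧ ξ b = true

lemma measurable_colour (v : V) : Measurable fun ξ : ColourCfg => ξ v = true := by
  have : MeasurableSet ((fun ξ : ColourCfg => ξ v) ⁻¹' {true}) := measurable_pi_apply v trivial
  exact measurableSet_setOfPred.1 this

lemma Gc_meas : MGr Gc := fun a b =>
  measurable_const.and ((measurable_colour a).and (measurable_colour b))

lemma Gc_black {ξ : ColourCfg} {x : V} (h : (Clus (Gc ξ) x).Infinite) : ξ x = true := by
  by_contra hx
  refine h ((Set.finite_singleton x).subset fun z hz => ?_)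
  rcases hz.cases_head with h | ⟨c, h, _⟩
  · exact h.symm
  · exact absurd h.2.1 hx

lemma Gc_symm (ξ : ColourCfg) (a b : V) (h : Gc ξ a b) : Gc ξ b a :=
  ⟨sqadj_symm h.1, h.2.2, h.2.1⟩

lemma mono_eq {ξ : ColourCfg} {w : V} (h : ξ w = true) : monoCluster SqAdj ξ true w = Clus (Gc ξ) w := by
  ext z; exact ⟨fun hz => hz.2, fun hz => ⟨h, hz⟩⟩

lemma encard_iff (ξ : ColourCfg) :
    {C : Set V | (∃ w : V, ξ w = true ∧ C = monoCluster SqAdj ξ true w) ∧ C.Infinite}.encard = 1 ↔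
      Some1 (Gc ξ) ∧ ¬ Two (Gc ξ) := by
  rw [Set.encard_eq_one]
  constructor
  · rintro ⟨C, hC⟩
    have hC0 : C ∈ ({C} : Set (Set V)) := rfl
    rw [← hC] at hC0
    obtain ⟨⟨w, hw, rfl⟩, hi⟩ := hC0
    rw [mono_eq hw] at hi hC
    refine ⟨⟨w, hi⟩, ?_⟩
    rintro ⟨x, y, hx, hy, hxy⟩
    have key : ∀ x, (Clus (Gc ξ) x).Infinite → Clus (Gc ξ) x = Clus (Gc ξ) w := fun x hx => by
      have : Clus (Gc ξ) x ∈ ({Clus (Gc ξ) w} : Set (Set V)) := by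
        rw [← hC]
        exact ⟨⟨x, Gc_black hx, (mono_eq (Gc_black hx)).symm⟩, hx⟩
      exact this
    have hy' : y ∈ Clus (Gc ξ) y := ReflTransGen.refl
    rw [key y hy, ← key x hx] at hy'
    exact hxy hy'
  · rintro ⟨⟨w, hw⟩, h2⟩
    refine ⟨Clus (Gc ξ) w, Set.eq_singleton_iff_unique_mem.2
      ⟨⟨⟨w, Gc_black hw, (mono_eq (Gc_black hw)).symm⟩, hw⟩, ?_⟩⟩
    rintro C ⟨⟨x, hx, rfl⟩, hi⟩
    rw [mono_eq hx] at hi ⊢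
    have hxw : ReflTransGen (Gc ξ) x w := by
      by_contra h; exact h2 ⟨x, w, hi, hw, h⟩
    ext z
    exact ⟨fun hz => (rtg_symm (Gc_symm ξ) hxw).trans hz, fun hz => hxw.trans hz⟩

lemma conn_eq (p r x : ℝ) (a b : V) :
    Conn (edgeCfg SqAdj p x) a b ↔ ReflTransGen (bond (XX p r x)) a b := by
  unfold Conn
  have : (fun a b => edgeCfg SqAdj p x a b = true) = bond (XX p r x) := by
    ext a b; exact edge_bond p r x a b
  rw [this]

lemma rep_spec (p r x : ℝ) (v : V) : IsRep le0 (XX p r x) v (clusterRep (edgeCfg SqAdj p x) v) := by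
  have hne : (Encodable.encode '' pCluster (edgeCfg SqAdj p x) v).Nonempty :=
    ⟨_, v, ReflTransGen.refl, rfl⟩
  obtain ⟨w, hw, hwe⟩ := Nat.sInf_mem hne
  have h1 : clusterRep (edgeCfg SqAdj p x) v = w := by
    unfold clusterRep
    rw [← hwe, Encodable.encodek]
    rfl
  rw [h1]
  refine ⟨(conn_eq p r x v w).1 hw, fun w' hw' => ?_⟩
  unfold le0
  rw [hwe]
  exact Nat.sInf_le ⟨w', (conn_eq p r x v w').2 hw', rfl⟩

lemma colour_eq (p r x : ℝ) : colourCfg SqAdj p r x = blkC le0 (XX p r x) := by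
  funext v
  have hk : ∀ w : V, XX p r x (w, 2) = true ↔ vtxU w x < r := fun w => boolOf_iff
  rw [Bool.eq_iff_iff, blkC, boolOf_iff, colourCfg, boolOf_iff, ← hk]
  constructor
  · exact fun h => ⟨_, rep_spec p r x v, h⟩
  · rintro ⟨w, h1, h2⟩
    rwa [h1.uniq good0 (rep_spec p r x v) .refl] at h2

lemma edge_eq (p r x : ℝ) : edgeCfg SqAdj p x = fun a b => boolOf (bond (XX p r x) a b) := by
  funext a b
  rw [Bool.eq_iff_iff, boolOf_iff, edge_bond p r]

lemma measurable_cfg (p r : ℝ) :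
    Measurable fun x => (edgeCfg SqAdj p x, colourCfg SqAdj p r x) := by
  have h1 : Measurable fun x => edgeCfg SqAdj p x := by
    simp_rw [edge_eq p r]
    exact measurable_pi_lambda _ fun a => measurable_pi_lambda _ fun b =>
      measurable_boolOf ((bond_meas a b).comp (measurable_XX p r))
  have h2 : Measurable fun x => colourCfg SqAdj p r x := by
    simp_rw [colour_eq]
    exact (measurable_blkC le0).comp (measurable_XX p r)
  exact h1.prodMk h2

lemma dac_apply {p : ℝ} (hp : p < 1 / 2) (r : ℝ) {B : ColourCfg → Prop} (hB : Measurable B) :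
    DaCMeasure SqAdj p r {ω | B ω.2} = PP (nu p r) {ω | B (blkC le1 ω)} := by
  have hB' : MeasurableSet {ξ | B ξ} := measurableSet_setOfPred.2 hB
  have e1 : PP (nu p r) {ω | B (blkC le1 ω)} = (PP (nu p r)).map (blkC le1) {ξ | B ξ} := by
    rw [Measure.map_apply (measurable_blkC _) hB']; rfl
  rw [e1, ← law_blk (finite_clusters hp r), ← law_XX, Measure.map_map (measurable_blkC _)
    (measurable_XX p r), Measure.map_apply ((measurable_blkC _).comp (measurable_XX p r)) hB',
    DaCMeasure, Measure.map_apply (measurable_cfg p r)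
    (show MeasurableSet {ω : Config | B ω.2} from measurable_snd hB')]
  simp_rw [colour_eq]
  rfl

noncomputable def GB (ω : Om) : Gr := Gc (blkC le1 ω)

lemma GB_iff {ω : Om} {a b : V} : GB ω a b ↔ SqAdj a b ∧ blk le1 ω a ∧ blk le1 ω b := by
  simp [GB, Gc, blkC, boolOf_iff]

lemma rtg_tau {u : V} {ω : Om} {a b : V} :
    ReflTransGen (bond (tau u ω)) a b ↔ ReflTransGen (bond ω) (a + u) (b + u) := by
  rw [bond_cov]; exact rtg_trans

lemma le1_add {u a b : V} : le1 (a + u) (b + u) ↔ le1 a b := by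
  unfold le1
  rw [Prod.Lex.toLex_le_toLex, Prod.Lex.toLex_le_toLex]
  simp

lemma rep_tau {u : V} {ω : Om} {a b : V} :
    IsRep le1 (tau u ω) a b ↔ IsRep le1 ω (a + u) (b + u) := by
  unfold IsRep
  simp_rw [rtg_tau]
  refine and_congr_right fun _ => ⟨fun h w hw => ?_, fun h w hw => ?_⟩
  · have := h (w - u) (by simpa using hw)
    rw [← le1_add (u := u)] at this
    simpa using this
  · exact le1_add.1 (h _ hw)

lemma blk_tau {u : V} {ω : Om} {a : V} : blk le1 (tau u ω) a ↔ blk le1 ω (a + u) := by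
  unfold blk
  simp_rw [rep_tau]
  constructor
  · rintro ⟨w, h1, h2⟩; exact ⟨_, h1, h2⟩
  · rintro ⟨w, h1, h2⟩; exact ⟨w - u, by simpa using h1, by simpa [tau] using h2⟩

lemma sqadj_add {u a b : V} : SqAdj (a + u) (b + u) ↔ SqAdj a b := by
  simp [SqAdj]

lemma GB_BK {p r : ℝ} (hp : p < 1 / 2) (hr : nu p r 2 {true} ≠ 0) : BK (nu p r) GB where
  nice ω := ⟨fun a b h => Gc_symm _ _ _ h, fun a b h => h.1⟩
  meas := fun a b => (Gc_meas a b).comp (measurable_blkC le1)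
  cov := by
    intro u ω
    ext a b
    rw [trans, GB_iff, GB_iff, blk_tau, blk_tau, sqadj_add]
  ins := by
    classical
    intro Q hQ
    filter_upwards [ae_phi hQ {2} (by rintro k rfl; exact hr), finite_clusters hp r] with ω hω hfin n
    have hcf : ∀ v, (Clus (bond ω) v).Finite := fun v => by
      by_contra h; exact hfin ⟨v, h⟩
    choose ρ hρ using IsRep.exists good1 hfin
    let F : Finset V := (box n 0).biUnion fun v => (hcf v).toFinset
    have hF : ∀ z, z ∈ F ↔ ∃ v ∈ box n 0, ReflTransGen (bond ω) v z := by
      intro z; simp [F, Clus]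
    let S : Finset (V × Fin 3) := (box n 0).image fun v => (ρ v, 2)
    have hS : ∀ i ∈ S, i.2 ∈ ({2} : Set (Fin 3)) := by
      intro i hi
      obtain ⟨v, _, rfl⟩ := Finset.mem_image.1 hi
      rfl
    let ω' := phi S ω
    have hb : bond ω' = bond ω := bond_congr fun i hi => by
      have : i ∉ S := fun h => hi (hS i h)
      simp [ω', phi, this]
    have hrep : ∀ v w, IsRep le1 ω' v w ↔ IsRep le1 ω v w := fun v w => by
      unfold IsRep; rw [hb]
    have hup : ∀ v, blk le1 ω v → blk le1 ω' v := by
      rintro v ⟨w, h1, h2⟩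
      refine ⟨w, (hrep _ _).2 h1, ?_⟩
      simp only [ω', phi]; split_ifs
      · rfl
      · exact h2
    have hdown : ∀ v, v ∉ F → blk le1 ω' v → blk le1 ω v := by
      rintro v hv ⟨w, h1, h2⟩
      have h1' := (hrep _ _).1 h1
      refine ⟨w, h1', ?_⟩
      have : ((w, 2) : V × Fin 3) ∉ S := by
        intro hw
        obtain ⟨u, hu, hu'⟩ := Finset.mem_image.1 hw
        have h3 : ρ u = w := congrArg Prod.fst hu'
        have h4 := (hρ u).1
        rw [h3] at h4
        exact hv ((hF v).2 ⟨u, hu, h4.trans (bond_rtg_symm h1'.1)⟩)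
      simpa [ω', phi, this] using h2
    have hin : ∀ v ∈ F, blk le1 ω' v := by
      intro v hv
      obtain ⟨u, hu, huv⟩ := (hF v).1 hv
      refine ⟨ρ u, (hrep _ _).2 ((hρ u).congr huv), ?_⟩
      have : ((ρ u, 2) : V × Fin 3) ∈ S := Finset.mem_image.2 ⟨u, hu, rfl⟩
      simp [ω', phi, this]
    have hbF : box n 0 ⊆ F := fun v hv => (hF v).2 ⟨v, hv, .refl⟩
    refine ⟨ω', F, hω S hS, hbF, ?_, ?_, ?_⟩
    · intro a b h
      rw [GB_iff] at *
      exact ⟨h.1, hup _ h.2.1, hup _ h.2.2⟩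
    · intro a b ha hb' h
      rw [GB_iff] at *
      exact ⟨h.1, hdown _ ha h.2.1, hdown _ hb' h.2.2⟩
    · have hsym : ∀ a b, On (GB ω') F a b → On (GB ω') F b a :=
        fun a b h => ⟨Gc_symm _ _ _ h.1, h.2.2, h.2.1⟩
      have hadj : ∀ a b, SqAdj a b → a ∈ F → b ∈ F → On (GB ω') F a b :=
        fun a b h ha hb' => ⟨GB_iff.2 ⟨h, hin a ha, hin b hb'⟩, ha, hb'⟩
      have h1 : ∀ u ∈ box n 0, ∀ z, ReflTransGen (bond ω) u z → ReflTransGen (On (GB ω') F) u z := by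
        intro u hu z hz
        induction hz with
        | refl => exact .refl
        | tail h2 h3 ih =>
          exact ih.tail (hadj _ _ ((bond_nice ω).2 _ _ h3) ((hF _).2 ⟨u, hu, h2⟩)
            ((hF _).2 ⟨u, hu, h2.tail h3⟩))
      have h2 := box_connected (G := GB ω') (fun a b h => Gc_symm _ _ _ h) n
        (fun a ha ha' => (hadj _ _ (by simp [SqAdj, e1]) (hbF ha) (hbF ha')).1)
        (fun a ha ha' => (hadj _ _ (by simp [SqAdj, e2]) (hbF ha) (hbF ha')).1)
      intro a ha b hb'
      obtain ⟨u, hu, hua⟩ := (hF a).1 ha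
      obtain ⟨v, hv, hvb⟩ := (hF b).1 hb'
      have h3 : ReflTransGen (On (GB ω') F) u v :=
        rtg_mono (fun x y h => ⟨h.1, hbF h.2.1, hbF h.2.2⟩) (h2 u hu v hv)
      exact (rtg_symm hsym (h1 u hu a hua)).trans (h3.trans (h1 v hv b hvb))

lemma theta_ne {p r : ℝ} (hr : rcSq p < r) (hr1 : r ≤ 1) : thetaSq p r ≠ 0 := by
  intro h
  have hbdd : BddAbove {r : ℝ | r ∈ Set.Icc (0 : ℝ) 1 ∧ thetaSq p r = 0} := ⟨1, fun x hx => hx.1.2⟩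
  have h0 : 0 ≤ rcSq p := Real.sSup_nonneg fun x hx => hx.1.1
  have : r ≤ rcSq p := le_csSup hbdd ⟨⟨by linarith, hr1⟩, h⟩
  linarith

lemma theta_some {p r : ℝ} (hp : p < 1 / 2) (h : ∀ᵐ ω ∂PP (nu p r), ¬ Some1 (GB ω)) :
    thetaSq p r = 0 := by
  have h1 : DaCMeasure SqAdj p r {ω | Some1 (Gc ω.2)} = 0 := by
    rw [dac_apply hp r Gc_meas.some1]
    rw [ae_iff] at h
    simp only [not_not] at h
    exact h
  refine measure_mono_null (fun ω hω => ?_) h1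
  have hi : (monoCluster SqAdj ω.2 true origin).Infinite := hω
  obtain ⟨w, hw⟩ := hi.nonempty
  rw [mono_eq hw.1] at hi
  exact ⟨_, hi⟩

lemma nu_ne {p r : ℝ} (hp : p < 1 / 2) (h : thetaSq p r ≠ 0) : nu p r 2 {true} ≠ 0 := by
  intro h0
  refine h (theta_some hp ?_)
  have h1 : ∀ᵐ ω ∂PP (nu p r), ∀ w : V, ¬ ω (w, 2) = true := by
    rw [ae_all_iff]
    intro w
    rw [ae_iff]
    simp only [not_not]
    have := (measurePreserving_eval_infinitePi (fun i : V × Fin 3 => nu p r i.2) (w, 2)).measure_preimage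
      (s := {true}) (MeasurableSet.singleton _).nullMeasurableSet
    rw [h0] at this
    exact this
  filter_upwards [h1] with ω hω
  rintro ⟨x, hx⟩
  have := Gc_black hx
  rw [blkC, boolOf_iff] at this
  obtain ⟨w, _, hw⟩ := this
  exact hω w hw

end DaC

namespace DaC

/-- **Uniqueness of the infinite cluster.** For `p < 1/2` and `r > r_c(p)`,
the number of infinite black `r`-clusters is `ℙ_{p,r}`-a.s. equal to `1`. -/
theorem unique_infinite_black_cluster (p r : ℝ) (hp0 : 0 ≤ p) (hp : p < 1 / 2)
    (hr : rcSq p < r) (hr1 : r ≤ 1) :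
    DaCMeasure SqAdj p r
      {ω : Config |
        {C : Set V | (∃ w : V, ω.2 w = true ∧ C = monoCluster SqAdj ω.2 true w) ∧
          C.Infinite}.encard = 1} = 1 := by
  have hθ := theta_ne hr hr1
  have hBK := GB_BK hp (nu_ne hp hθ)
  simp_rw [encard_iff]
  rw [dac_apply hp r (Gc_meas.some1.and Gc_meas.two.not)]
  have h1 : ∀ᵐ ω ∂PP (nu p r), Some1 (GB ω) := by
    rcases hBK.some01 with h | h
    · exact absurd (theta_some hp h) hθ
    · exact h
  have h2 := hBK.unique
  have h3 : ∀ᵐ ω ∂PP (nu p r), ω ∈ {ω | Some1 (Gc (blkC le1 ω)) ∧ ¬ Two (Gc (blkC le1 ω))} := by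
    filter_upwards [h1, h2] with ω a b using ⟨a, b⟩
  exact (measure_congr (Filter.eventuallyEq_univ.2 h3)).trans measure_univ

end DaC
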